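/- Let c ∈ (0,1), assume k_c > 0 satisfies a(k_c) = c, m'(k_c) ≠ 0, and m(k) ≠ 0 for all real k ∉ {−k_c, k_c}, let (Ψ_δ)_{δ>0} satisfy Assumption A with constant C_Ψ and I_δ = 0 for all δ > 0, and let R₀ be an unperturbed wave. Then there exist constants C₀, C₁, C₂ > 0 and δ₀ > 0 such that for every 0 < δ < δ₀ there is exactly one S ∈ X with ‖S‖_∞ ≤ C₀δ², ‖S'‖_∞ ≤ C₁δ, and ‖S''‖_∞ ≤ C₂ for which there exists η ∈ ℝ with M S = A² G(S) + η; moreover, this unique S is δ-admissible. -/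

import Mathlib

open MeasureTheory Real Filter Topology

/-- The averaging operator `(A F)(x) = ∫_{x-1/2}^{x+1/2} F(s) ds`. -/
noncomputable def Aop (F : ℝ → ℝ) : ℝ → ℝ := fun x => ∫ s in (x - 1/2)..(x + 1/2), F s

/-- The operator `M F = A(A F) - c² F`. -/
noncomputable def Mop (c : ℝ) (F : ℝ → ℝ) : ℝ → ℝ := fun x => Aop (Aop F) x - c ^ 2 * F x

/-- Membership in `W^{2,∞}(ℝ)`. -/
def IsW2inf (S : ℝ → ℝ) : Prop :=
  Differentiable ℝ S ∧ (∃ C : ℝ, ∀ x, |S x| ≤ C ∧ |deriv S x| ≤ C) ∧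
    ∃ K : NNReal, LipschitzWith K (deriv S)

/-- Assumption A for the family `(Ψ_δ)_{δ>0}` with constant `C_Ψ`. -/
def AssumptionA (Ψ : ℝ → ℝ → ℝ) (CΨ : ℝ) : Prop :=
  0 < CΨ ∧ ∀ δ : ℝ, 0 < δ →
    Ψ δ 0 = 0 ∧ ContDiff ℝ 2 (Ψ δ) ∧
    (∀ r : ℝ, δ ≤ |r| → deriv (Ψ δ) r = Real.sign r) ∧
    (∀ r : ℝ, |deriv (Ψ δ) r| ≤ CΨ) ∧
    (∀ r : ℝ, |deriv (deriv (Ψ δ)) r| ≤ CΨ / δ)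

/-- The quantity `I_δ = ½ ∫_ℝ (Ψ'_δ(r) − sgn r) dr`. -/
noncomputable def Idelta (Ψ : ℝ → ℝ → ℝ) (δ : ℝ) : ℝ :=
  (1 / 2) * ∫ r : ℝ, (deriv (Ψ δ) r - Real.sign r)

/-- An unperturbed wave `R₀`: a `W^{2,∞}` solution of `M R₀ = A²(sgn ∘ R₀) + μ₀` with
`R₀(0) = 0` which leaves a neighbourhood of `0` monotonically and stays away from `0`. -/
def UnperturbedWave (c : ℝ) (R₀ : ℝ → ℝ) : Prop :=
  IsW2inf R₀ ∧ R₀ 0 = 0 ∧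
  (∃ μ₀ : ℝ, ∀ x, Mop c R₀ x = Aop (Aop (fun y => Real.sign (R₀ y))) x + μ₀) ∧
  ∃ x₀ r₀ d₀ : ℝ, 0 < x₀ ∧ 0 < r₀ ∧ 0 < d₀ ∧
    (∀ x, x₀ < x → r₀ < R₀ x) ∧ (∀ x, x < -x₀ → R₀ x < -r₀) ∧
    (∀ x, |x| < x₀ → d₀ < deriv R₀ x)

/-- `δ`-admissibility of a corrector `S` relative to `R₀`. -/
def Admissible (δ : ℝ) (R₀ S : ℝ → ℝ) : Prop :=
  IsW2inf S ∧ S 0 = 0 ∧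
  ∃ xm xp : ℝ, xm < 0 ∧ 0 < xp ∧
    R₀ xm + S xm = -δ ∧ R₀ xp + S xp = δ ∧
    (∀ x, x < xm → R₀ x + S x < -δ) ∧
    (∀ x, xp < x → δ < R₀ x + S x) ∧
    (∀ x, xm < x → x < xp →
      deriv R₀ 0 / 2 < deriv R₀ x + deriv S x ∧ deriv R₀ x + deriv S x < 2 * deriv R₀ 0)

/-- The nonlinear superposition operator `G(S)(x) = Ψ'_δ(R₀(x)+S(x)) − sgn(R₀(x))`. -/
noncomputable def Gop (Ψ : ℝ → ℝ → ℝ) (δ : ℝ) (R₀ S : ℝ → ℝ) : ℝ → ℝ :=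
  fun x => deriv (Ψ δ) (R₀ x + S x) - Real.sign (R₀ x)

/-- The symbol `a(k) = sin(k/2)/(k/2)`, with `a(0) = 1`. -/
noncomputable def symb (k : ℝ) : ℝ := if k = 0 then 1 else Real.sin (k / 2) / (k / 2)

/-- The symbol `m(k) = a(k)² - c²`. -/
noncomputable def msymb (c : ℝ) : ℝ → ℝ := fun k => (symb k) ^ 2 - c ^ 2

/-- The space `X` of `S ∈ W^{2,∞}(ℝ)` with `S(0) = 0` such that `lim_{x→+∞} S(x)` exists. -/
def IsX (S : ℝ → ℝ) : Prop := IsW2inf S ∧ S 0 = 0 ∧ ∃ l : ℝ, Tendsto S atTop (nhds l)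

open scoped FourierTransform ContDiff NNReal Interval

/-!
The symbol `m` of `M` has only the simple real zeros `±kc`, so every symbol vanishing there is
divisible by `m`. Hence the translation rule obeyed by `cos (kc x)` and `sin (kc x)` holds for every
bounded solution of `M U = 0`, and asymptotically wherever `M U → 0`; testing against band-limited
functions makes this rigorous for merely bounded `U`. It follows that `M` is injective, modulo
constants, on functions with a limit at `+∞`. Where `A² F = c² F` on a half-line, a conserved
bilinear flux of `A F + c F` against `cos (kc x)` fixes the amplitude and phase of the oscillation
of `F` at `+∞`.

Differentiating the wave equation, `R₀' / 2` solves `M g = A² δ₀` with `δ₀` the Dirac mass;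
subtracting its oscillation at `+∞` yields a Green function `g` with `g → 0` at `+∞`. Correctors
are the fixed points of `S ↦ g * G(S) - (g * G(S))(0)`. Since `G(S)` is bounded and supported where
`|x| ≲ δ`, and `I_δ = 0` gives `∫ G(S) = O(δ²)`, this map preserves a ball `|S| ≤ C₀ δ²`,
`|S'| ≤ C₁ δ` and contracts `sup |S'|` there.
-/

theorem intervalIntegrable_of_locallyIntegrable {F : ℝ → ℝ} (hF : LocallyIntegrable F)
    (a b : ℝ) : IntervalIntegrable F volume a b :=
  (hF.integrableOn_isCompact isCompact_uIcc).intervalIntegrable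

section Averaging

variable {F G : ℝ → ℝ}

theorem Aop_eq_integral_comp_add (F : ℝ → ℝ) (x : ℝ) :
    Aop F x = ∫ t in (-1 / 2 : ℝ)..(1 / 2), F (x + t) := by
  rw [Aop, intervalIntegral.integral_comp_add_left]
  congr 1
  ring

theorem abs_Aop_le {B : ℝ} (hB : ∀ x, |F x| ≤ B) (x : ℝ) : |Aop F x| ≤ B := by
  have h := intervalIntegral.norm_integral_le_of_norm_le_const (a := x - 1 / 2) (b := x + 1 / 2)
    (f := F) (C := B) fun y _ => hB y
  rwa [show x + 1 / 2 - (x - 1 / 2) = 1 by ring, abs_one, mul_one] at h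

theorem Aop_comp_add_right (F : ℝ → ℝ) (s : ℝ) :
    Aop (fun y => F (y + s)) = fun x => Aop F (x + s) := by
  ext x
  simp only [Aop_eq_integral_comp_add, add_right_comm]

theorem Aop_const (r : ℝ) : Aop (fun _ => r) = fun _ => r := by
  ext x
  simp only [Aop_eq_integral_comp_add, intervalIntegral.integral_const, smul_eq_mul]
  ring

theorem Aop_const_mul (r : ℝ) (F : ℝ → ℝ) : Aop (fun y => r * F y) = fun x => r * Aop F x := by
  ext x
  exact intervalIntegral.integral_const_mul r F

theorem Aop_sub (hF : LocallyIntegrable F) (hG : LocallyIntegrable G) :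
    Aop (fun y => F y - G y) = fun x => Aop F x - Aop G x := by
  ext x
  exact intervalIntegral.integral_sub (intervalIntegrable_of_locallyIntegrable hF _ _)
    (intervalIntegrable_of_locallyIntegrable hG _ _)

theorem Aop_eq_sub_primitive (hF : LocallyIntegrable F) :
    Aop F = fun x => (∫ s in (0 : ℝ)..(x + 1 / 2), F s) - ∫ s in (0 : ℝ)..(x - 1 / 2), F s := by
  ext x
  have hint := intervalIntegrable_of_locallyIntegrable hF
  exact (intervalIntegral.integral_interval_sub_left (hint _ _) (hint _ _)).symm

theorem continuous_Aop (hF : LocallyIntegrable F) : Continuous (Aop F) := by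
  have hprim : Continuous fun x => ∫ s in (0 : ℝ)..x, F s :=
    intervalIntegral.continuous_primitive (intervalIntegrable_of_locallyIntegrable hF) 0
  rw [Aop_eq_sub_primitive hF]
  fun_prop

theorem hasDerivAt_primitive (hF : Continuous F) (x : ℝ) :
    HasDerivAt (fun x => ∫ t in (0 : ℝ)..x, F t) (F x) x :=
  (hF.integral_hasStrictDerivAt 0 x).hasDerivAt

theorem hasDerivAt_integral_comp_add (hF : Continuous F) (a b x : ℝ) :
    HasDerivAt (fun x => ∫ t in a..b, F (x + t)) (F (x + b) - F (x + a)) x := by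
  have hsub : (fun x => ∫ t in a..b, F (x + t))
      = fun x => (∫ s in (0 : ℝ)..(x + b), F s) - ∫ s in (0 : ℝ)..(x + a), F s := by
    ext x
    rw [intervalIntegral.integral_comp_add_left]
    exact (intervalIntegral.integral_interval_sub_left (hF.intervalIntegrable _ _)
      (hF.intervalIntegrable _ _)).symm
  rw [hsub]
  exact ((hasDerivAt_primitive hF (x + b)).comp_add_const x b).sub
    ((hasDerivAt_primitive hF (x + a)).comp_add_const x a)

theorem hasDerivAt_Aop (hF : Continuous F) (x : ℝ) :
    HasDerivAt (Aop F) (F (x + 1 / 2) - F (x - 1 / 2)) x := by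
  rw [funext (Aop_eq_integral_comp_add F), sub_eq_add_neg x, ← neg_div]
  exact hasDerivAt_integral_comp_add hF (-1 / 2) (1 / 2) x

theorem Aop_deriv {F' : ℝ → ℝ} (h : ∀ x, HasDerivAt F (F' x) x) (hc : Continuous F') (x : ℝ) :
    Aop F' x = F (x + 1 / 2) - F (x - 1 / 2) :=
  intervalIntegral.integral_eq_sub_of_hasDerivAt (fun y _ => h y) (hc.intervalIntegrable _ _)

theorem hasDerivAt_Aop_of_hasDerivAt {F' : ℝ → ℝ} (h : ∀ x, HasDerivAt F (F' x) x)
    (hc : Continuous F') (x : ℝ) : HasDerivAt (Aop F) (Aop F' x) x := by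
  rw [Aop_deriv h hc]
  exact hasDerivAt_Aop (continuous_iff_continuousAt.2 fun y => (h y).continuousAt) x

theorem Aop_convolution {g : ℝ → ℝ} {B : ℝ} (hg : Measurable g) (hB : ∀ x, |g x| ≤ B)
    (hG : Integrable G) :
    Aop (fun x => ∫ y, g (x - y) * G y) = fun x => ∫ y, Aop g (x - y) * G y := by
  ext x
  have hint : Integrable (Function.uncurry fun t y => g (x + t - y) * G y)
      ((volume.restrict (Ι (-1 / 2 : ℝ) (1 / 2))).prod volume) := by
    have hbase : Integrable (fun p : ℝ × ℝ => (1 : ℝ) * G p.2)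
        ((volume.restrict (Ι (-1 / 2 : ℝ) (1 / 2))).prod volume) :=
      Integrable.mul_prod (f := fun _ : ℝ => (1 : ℝ))
        (integrableOn_const (by simp [Set.uIoc]) (by simp)) hG
    have hm : Measurable fun p : ℝ × ℝ => g (x + p.1 - p.2) := hg.comp (by fun_prop)
    simpa [Function.uncurry_def] using hbase.bdd_mul (c := B) hm.aestronglyMeasurable
      (Eventually.of_forall fun p => hB _)
  rw [Aop_eq_integral_comp_add, intervalIntegral_integral_swap hint]
  congr 1 with y
  rw [intervalIntegral.integral_mul_const, Aop_eq_integral_comp_add]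
  simp only [sub_add_eq_add_sub]

end Averaging

theorem locallyIntegrable_of_abs_le {F : ℝ → ℝ} {B : ℝ} (hF : Measurable F)
    (hB : ∀ x, |F x| ≤ B) : LocallyIntegrable F :=
  (locallyIntegrable_const B).mono hF.aestronglyMeasurable
    (Eventually.of_forall fun x => (hB x).trans (le_abs_self B))

theorem lipschitzWith_Aop {F : ℝ → ℝ} {B : ℝ≥0} (hF : LocallyIntegrable F)
    (hB : ∀ x, |F x| ≤ B) : LipschitzWith (2 * B) (Aop F) := by
  refine LipschitzWith.of_dist_le_mul fun x y => ?_
  have hint := intervalIntegrable_of_locallyIntegrable hF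
  have hsub : Aop F x - Aop F y
      = (∫ s in (y + 1 / 2)..(x + 1 / 2), F s) - ∫ s in (y - 1 / 2)..(x - 1 / 2), F s := by
    have hr := intervalIntegral.integral_interval_sub_left (hint 0 (x + 1 / 2)) (hint 0 (y + 1 / 2))
    have hl := intervalIntegral.integral_interval_sub_left (hint 0 (x - 1 / 2)) (hint 0 (y - 1 / 2))
    rw [Aop_eq_sub_primitive hF, ← hr, ← hl]
    ring
  have hpiece (h : ℝ) : |∫ s in (y + h)..(x + h), F s| ≤ B * |x - y| := by
    simpa using intervalIntegral.norm_integral_le_of_norm_le_const (a := y + h) (b := x + h)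
      (f := F) (C := B) fun z _ => hB z
  have hr := hpiece (1 / 2)
  have hl := hpiece (-(1 / 2))
  rw [Real.dist_eq, Real.dist_eq, hsub]
  simp only [← sub_eq_add_neg] at hl
  push_cast
  linarith [abs_sub (∫ s in (y + 1 / 2)..(x + 1 / 2), F s) (∫ s in (y - 1 / 2)..(x - 1 / 2), F s)]

section SquareMinusSpeed

variable {c : ℝ} {F G : ℝ → ℝ}

theorem Mop_comp_add_right (c : ℝ) (F : ℝ → ℝ) (s : ℝ) :
    Mop c (fun y => F (y + s)) = fun x => Mop c F (x + s) := by
  ext x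
  simp only [Mop, Aop_comp_add_right]

theorem Mop_const (c r : ℝ) : Mop c (fun _ => r) = fun _ => (1 - c ^ 2) * r := by
  ext x
  simp only [Mop, Aop_const]
  ring

theorem Mop_const_mul (c r : ℝ) (F : ℝ → ℝ) :
    Mop c (fun y => r * F y) = fun x => r * Mop c F x := by
  ext x
  simp only [Mop, Aop_const_mul]
  ring

theorem Aop_Aop_sub (hF : LocallyIntegrable F) (hG : LocallyIntegrable G) :
    Aop (Aop fun y => F y - G y) = fun x => Aop (Aop F) x - Aop (Aop G) x := by
  rw [Aop_sub hF hG, Aop_sub (continuous_Aop hF).locallyIntegrable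
    (continuous_Aop hG).locallyIntegrable]

theorem Mop_sub (c : ℝ) (hF : LocallyIntegrable F) (hG : LocallyIntegrable G) :
    Mop c (fun y => F y - G y) = fun x => Mop c F x - Mop c G x := by
  ext x
  simp only [Mop, Aop_Aop_sub hF hG]
  ring

theorem hasDerivAt_Mop {F' : ℝ → ℝ} (h : ∀ x, HasDerivAt F (F' x) x) (hc : Continuous F')
    (x : ℝ) : HasDerivAt (Mop c F) (Mop c F' x) x :=
  (hasDerivAt_Aop_of_hasDerivAt (hasDerivAt_Aop_of_hasDerivAt h hc)
    (continuous_Aop hc.locallyIntegrable) x).sub ((h x).const_mul _)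

theorem Mop_convolution {g : ℝ → ℝ} {B : ℝ} (hg : Measurable g) (hB : ∀ x, |g x| ≤ B)
    (hG : Integrable G) :
    Mop c (fun x => ∫ y, g (x - y) * G y) = fun x => ∫ y, Mop c g (x - y) * G y := by
  have hcont : Continuous (Aop g) := continuous_Aop (locallyIntegrable_of_abs_le hg hB)
  have hAg (x : ℝ) : Integrable fun y => Aop (Aop g) (x - y) * G y :=
    hG.bdd_mul (c := B) (by
      have := continuous_Aop hcont.locallyIntegrable
      exact (by fun_prop : Continuous _).aestronglyMeasurable)
      (Eventually.of_forall fun y => abs_Aop_le (abs_Aop_le hB) _)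
  have hgi (x : ℝ) : Integrable fun y => g (x - y) * G y :=
    hG.bdd_mul (c := B) (hg.comp (by fun_prop)).aestronglyMeasurable
      (Eventually.of_forall fun y => hB _)
  ext x
  rw [Mop, Aop_convolution hg hB hG, Aop_convolution hcont.measurable (abs_Aop_le hB) hG,
    ← integral_const_mul, ← integral_sub (hAg x) ((hgi x).const_mul _)]
  congr 1 with y
  simp only [Mop]
  ring

end SquareMinusSpeed

/-! ### Band-limited test functions -/

theorem contDiff_ofReal_comp {f : ℂ → ℂ} (hf : Differentiable ℂ f) :
    ContDiff ℝ ∞ fun k : ℝ => f k :=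
  (hf.contDiff.restrict_scalars ℝ).comp Complex.ofRealCLM.contDiff

/-- The trigonometric integral `∫ e^{ikx} h(k) dk`; for `h` smooth with compact support it is a
band-limited Schwartz function, and these are the test functions against which the averaging
operators are inverted. -/
noncomputable def synth (h : ℝ → ℂ) (x : ℝ) : ℂ := ∫ k : ℝ, Complex.exp (Complex.I * k * x) * h k

/-- The spectra `h` for which `synth h` serves as a test function. -/
structure IsTestSpectrum (h : ℝ → ℂ) : Prop where
  hasCompactSupport : HasCompactSupport h
  contDiff : ContDiff ℝ ∞ h

namespace IsTestSpectrum

variable {h h₁ h₂ : ℝ → ℂ}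

theorem mul_left {p : ℝ → ℂ} (hh : IsTestSpectrum h) (hp : ContDiff ℝ ∞ p) :
    IsTestSpectrum fun k => p k * h k :=
  ⟨hh.hasCompactSupport.mul_left, hp.mul hh.contDiff⟩

theorem integrable (hh : IsTestSpectrum h) : Integrable h :=
  hh.contDiff.continuous.integrable_of_hasCompactSupport hh.hasCompactSupport

theorem comp_div (hh : IsTestSpectrum h) {R : ℝ} (hR : R ≠ 0) :
    IsTestSpectrum fun k => h (k / R) :=
  ⟨hh.hasCompactSupport.comp_homeomorph (Homeomorph.mulRight₀ R⁻¹ (inv_ne_zero hR)),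
    hh.contDiff.comp (by fun_prop)⟩

theorem integrable_exp_mul (hh : IsTestSpectrum h) (x : ℝ) :
    Integrable fun k : ℝ => Complex.exp (Complex.I * k * x) * h k :=
  (hh.mul_left (contDiff_ofReal_comp (f := fun z => Complex.exp (Complex.I * z * x))
    (by fun_prop))).integrable

theorem exists_schwartzMap (hh : IsTestSpectrum h) :
    ∃ f : SchwartzMap ℝ ℂ, (synth h = fun x => f (x / (2 * π))) ∧ ∫ y, f y = h 0 := by
  let H : SchwartzMap ℝ ℂ := hh.hasCompactSupport.toSchwartzMap hh.contDiff
  refine ⟨𝓕⁻ H, funext fun x => ?_, ?_⟩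
  · rw [SchwartzMap.fourierInv_coe, Real.fourierInv_eq', synth]
    congr 1 with k
    change _ = Complex.exp _ * h k
    simp only [RCLike.inner_apply, conj_trivial]
    congr 2
    push_cast
    field_simp
  · have hinv : 𝓕 (𝓕⁻ H) 0 = h 0 := by
      rw [FourierTransform.fourier_fourierInv_eq]
      rfl
    rw [SchwartzMap.fourier_coe, Real.fourier_real_eq] at hinv
    simpa using hinv

theorem integrable_synth (hh : IsTestSpectrum h) : Integrable (synth h) := by
  obtain ⟨f, hf, -⟩ := hh.exists_schwartzMap
  rw [hf]
  exact f.integrable.comp_div (by positivity)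

theorem integrable_abs_mul_norm_synth (hh : IsTestSpectrum h) :
    Integrable fun x => |x| * ‖synth h x‖ := by
  obtain ⟨f, hf, -⟩ := hh.exists_schwartzMap
  have hmoment := ((f.integrable_pow_mul volume 1).comp_div (R := 2 * π)
    (by positivity)).const_mul (2 * π)
  refine hmoment.congr (Eventually.of_forall fun x => ?_)
  simp only [hf, pow_one, Real.norm_eq_abs, abs_div, abs_of_pos two_pi_pos]
  field_simp

theorem continuous_synth (hh : IsTestSpectrum h) : Continuous (synth h) := by
  obtain ⟨f, hf, -⟩ := hh.exists_schwartzMap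
  rw [hf]
  exact f.continuous.comp (by fun_prop)

theorem integral_synth (hh : IsTestSpectrum h) : ∫ x, synth h x = 2 * π * h 0 := by
  obtain ⟨f, hf, h0⟩ := hh.exists_schwartzMap
  rw [hf, Measure.integral_comp_div (fun x => f x), h0, abs_of_pos (by positivity)]
  simp

theorem synth_sub (hh₁ : IsTestSpectrum h₁) (hh₂ : IsTestSpectrum h₂) (x : ℝ) :
    synth (fun k => h₁ k - h₂ k) x = synth h₁ x - synth h₂ x := by
  simp only [synth, mul_sub]
  exact integral_sub (hh₁.integrable_exp_mul x) (hh₂.integrable_exp_mul x)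

end IsTestSpectrum

theorem synth_const_mul (r : ℂ) (h : ℝ → ℂ) (x : ℝ) :
    synth (fun k => r * h k) x = r * synth h x := by
  simp only [synth, mul_left_comm _ r, integral_const_mul]

theorem synth_apply_sub (h : ℝ → ℂ) (x s : ℝ) :
    synth h (x - s) = synth (fun k => Complex.exp (-(Complex.I * k * s)) * h k) x := by
  simp only [synth, ← mul_assoc, ← Complex.exp_add]
  congr! 4
  push_cast
  ring

theorem synth_comp_div (h : ℝ → ℂ) {R : ℝ} (hR : 0 < R) (x : ℝ) :
    synth (fun k => h (k / R)) x = R * synth h (R * x) := by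
  have hscale := Measure.integral_comp_div
    (fun k : ℝ => Complex.exp (Complex.I * k * (R * x : ℝ)) * h k) R
  rw [abs_of_pos hR] at hscale
  rw [synth, synth, ← Complex.real_smul, ← hscale]
  congr! 4 with k
  have hR' : (R : ℂ) ≠ 0 := by exact_mod_cast hR.ne'
  push_cast
  field_simp

/-- Bounded measurable functions, the common domain of the operators below. -/
structure IsBoundedMeasurable (F : ℝ → ℝ) : Prop where
  measurable : Measurable F
  bounded : ∃ B, ∀ x, |F x| ≤ B

namespace IsBoundedMeasurable

variable {F G : ℝ → ℝ}

theorem locallyIntegrable (hF : IsBoundedMeasurable F) : LocallyIntegrable F :=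
  let ⟨_, hB⟩ := hF.bounded
  locallyIntegrable_of_abs_le hF.measurable hB

theorem integrable_mul (hF : IsBoundedMeasurable F) {ψ : ℝ → ℂ} (hψ : Integrable ψ) :
    Integrable fun y => (F y : ℂ) * ψ y := by
  obtain ⟨B, hB⟩ := hF.bounded
  exact hψ.bdd_mul (c := B) (Complex.measurable_ofReal.comp hF.measurable).aestronglyMeasurable
    (Eventually.of_forall fun y => (Complex.norm_real _).trans_le (hB y))

theorem sub (hF : IsBoundedMeasurable F) (hG : IsBoundedMeasurable G) :
    IsBoundedMeasurable fun x => F x - G x := by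
  obtain ⟨B, hB⟩ := hF.bounded
  obtain ⟨B', hB'⟩ := hG.bounded
  exact ⟨hF.measurable.sub hG.measurable, B + B',
    fun x => (abs_sub _ _).trans (add_le_add (hB x) (hB' x))⟩

theorem const_mul (r : ℝ) (hF : IsBoundedMeasurable F) : IsBoundedMeasurable fun x => r * F x := by
  obtain ⟨B, hB⟩ := hF.bounded
  exact ⟨hF.measurable.const_mul r, |r| * B,
    fun x => (abs_mul _ _).trans_le (mul_le_mul_of_nonneg_left (hB x) (abs_nonneg r))⟩

theorem comp_add_right (hF : IsBoundedMeasurable F) (s : ℝ) :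
    IsBoundedMeasurable fun x => F (x + s) :=
  let ⟨B, hB⟩ := hF.bounded
  ⟨hF.measurable.comp (measurable_add_const s), B, fun _ => hB _⟩

protected theorem Aop (hF : IsBoundedMeasurable F) : IsBoundedMeasurable (Aop F) :=
  let ⟨B, hB⟩ := hF.bounded
  ⟨(continuous_Aop hF.locallyIntegrable).measurable, B, abs_Aop_le hB⟩

end IsBoundedMeasurable

theorem integral_Aop_mul {F : ℝ → ℝ} (hF : IsBoundedMeasurable F) {φ : ℝ → ℂ}
    (hφ : Integrable φ) (hc : Continuous φ) :
    ∫ y, (Aop F y : ℂ) * φ y = ∫ y, (F y : ℂ) * ∫ t in (-1 / 2 : ℝ)..(1 / 2), φ (y - t) := by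
  obtain ⟨B, hB⟩ := hF.bounded
  have hFm : Measurable fun y => (F y : ℂ) := Complex.measurable_ofReal.comp hF.measurable
  have hfin : IsFiniteMeasure (volume.restrict (Ι (-1 / 2 : ℝ) (1 / 2))) := ⟨by simp [Set.uIoc]⟩
  have hint₁ : Integrable (Function.uncurry fun t y => (F (y + t) : ℂ) * φ y)
      ((volume.restrict (Ι (-1 / 2 : ℝ) (1 / 2))).prod volume) := by
    have hm : Measurable fun p : ℝ × ℝ => (F (p.2 + p.1) : ℂ) := hFm.comp (by fun_prop)
    exact (hφ.comp_snd _).bdd_mul (c := B) hm.aestronglyMeasurable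
      (Eventually.of_forall fun p => (Complex.norm_real _).trans_le (hB _))
  have hint₂ : Integrable (Function.uncurry fun t y => (F y : ℂ) * φ (y - t))
      ((volume.restrict (Ι (-1 / 2 : ℝ) (1 / 2))).prod volume) := by
    have hbase : Integrable (fun p : ℝ × ℝ => φ (p.2 - p.1))
        ((volume.restrict (Ι (-1 / 2 : ℝ) (1 / 2))).prod volume) := by
      rw [integrable_prod_iff (by fun_prop : Continuous _).aestronglyMeasurable]
      refine ⟨Eventually.of_forall fun t => hφ.comp_sub_right t, ?_⟩
      simp only [integral_sub_right_eq_self fun y => ‖φ y‖, integrable_const]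
    exact hbase.bdd_mul (c := B) (hFm.comp measurable_snd).aestronglyMeasurable
      (Eventually.of_forall fun p => (Complex.norm_real _).trans_le (hB _))
  simp only [Aop_eq_integral_comp_add, ← intervalIntegral.integral_ofReal,
    ← intervalIntegral.integral_mul_const, ← intervalIntegral.integral_const_mul]
  rw [← intervalIntegral_integral_swap hint₁, ← intervalIntegral_integral_swap hint₂]
  congr 1 with t
  rw [← integral_sub_right_eq_self _ t]
  simp only [sub_add_cancel]

theorem integral_exp_eq_symb (k : ℝ) :
    ∫ t in (-1 / 2 : ℝ)..(1 / 2), Complex.exp (-(Complex.I * k * t)) = symb k := by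
  rcases eq_or_ne k 0 with rfl | hk
  · norm_num [symb]
  · have hk' : (k : ℂ) ≠ 0 := by exact_mod_cast hk
    have hI : -(Complex.I * k) ≠ 0 := neg_ne_zero.2 (mul_ne_zero Complex.I_ne_zero hk')
    simp only [← neg_mul]
    rw [integral_exp_mul_complex (by simpa using hI), symb, if_neg hk]
    push_cast
    rw [Complex.sin]
    field_simp
    ring_nf
    simp [Complex.I_sq]

theorem integral_synth_sub_eq_synth_symb_mul {h : ℝ → ℂ} (hh : IsTestSpectrum h) (y : ℝ) :
    ∫ t in (-1 / 2 : ℝ)..(1 / 2), synth h (y - t) = synth (fun k => symb k * h k) y := by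
  have hint : Integrable (Function.uncurry fun (t k : ℝ) =>
      Complex.exp (Complex.I * k * (y - t : ℝ)) * h k)
      ((volume.restrict (Ι (-1 / 2 : ℝ) (1 / 2))).prod volume) := by
    have hfin : IsFiniteMeasure (volume.restrict (Ι (-1 / 2 : ℝ) (1 / 2))) := ⟨by simp [Set.uIoc]⟩
    have hm : Continuous fun p : ℝ × ℝ => Complex.exp (Complex.I * p.2 * (y - p.1 : ℝ)) := by
      fun_prop
    exact (hh.integrable.comp_snd _).bdd_mul (c := 1) hm.aestronglyMeasurable
      (Eventually.of_forall fun p => by simp [Complex.norm_exp])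
  simp only [synth]
  rw [intervalIntegral_integral_swap hint]
  congr 1 with k
  rw [intervalIntegral.integral_mul_const, ← mul_assoc, ← integral_exp_eq_symb,
    ← intervalIntegral.integral_const_mul]
  congr! 3 with t
  rw [← Complex.exp_add]
  congr 1
  push_cast
  ring

/-! ### Symbols and division by `m` -/

theorem differentiable_dslope {f : ℂ → ℂ} (hf : Differentiable ℂ f) (a : ℂ) :
    Differentiable ℂ (dslope f a) := by
  rw [← differentiableOn_univ] at hf ⊢
  exact (Complex.differentiableOn_dslope Filter.univ_mem).2 hf

theorem exists_differentiable_eq_mul_mul {f : ℂ → ℂ} (hf : Differentiable ℂ f) {a b : ℂ}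
    (hab : a ≠ b) (ha : f a = 0) (hb : f b = 0) :
    ∃ F : ℂ → ℂ, Differentiable ℂ F ∧ ∀ z, f z = (z - a) * (z - b) * F z := by
  have hfactor (z : ℂ) : f z = (z - a) * dslope f a z := by
    simpa [ha] using (sub_smul_dslope f a z).symm
  have hb' : dslope f a b = 0 := by
    simpa [hb, sub_ne_zero.2 hab.symm] using (hfactor b).symm
  refine ⟨dslope (dslope f a) b, differentiable_dslope (differentiable_dslope hf a) b,
    fun z => ?_⟩
  rw [hfactor z, mul_assoc, ← smul_eq_mul (z - b), sub_smul_dslope, hb', sub_zero]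

theorem deriv_mul_mul_left {F : ℂ → ℂ} (hF : Differentiable ℂ F) (a b : ℂ) :
    deriv (fun z => (z - a) * (z - b) * F z) a = (a - b) * F a := by
  have hd := (((hasDerivAt_id a).sub_const a).fun_mul ((hasDerivAt_id a).sub_const b)).fun_mul
    (hF a).hasDerivAt
  simpa using hd.deriv

theorem exists_contDiff_mul_eq_of_simple_zeros {m E : ℂ → ℂ} (hm : Differentiable ℂ m)
    (hE : Differentiable ℂ E) {a b : ℝ} (hab : a ≠ b) (hma : m a = 0) (hmb : m b = 0)
    (hma' : deriv m a ≠ 0) (hmb' : deriv m b ≠ 0) (hm0 : ∀ k : ℝ, k ≠ a → k ≠ b → m k ≠ 0)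
    (hEa : E a = 0) (hEb : E b = 0) :
    ∃ q : ℝ → ℂ, ContDiff ℝ ∞ q ∧ ∀ k : ℝ, q k * m k = E k := by
  have habC : (a : ℂ) ≠ b := by exact_mod_cast hab
  obtain ⟨N, hN, hmN⟩ := exists_differentiable_eq_mul_mul hm habC hma hmb
  obtain ⟨D, hD, hED⟩ := exists_differentiable_eq_mul_mul hE habC hEa hEb
  have hNa : N a ≠ 0 := fun h0 => hma' <| by
    rw [funext hmN, deriv_mul_mul_left hN, h0, mul_zero]
  have hNb : N b ≠ 0 := fun h0 => hmb' <| by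
    simp only [funext hmN, mul_comm (_ - (a : ℂ))]
    rw [deriv_mul_mul_left hN, h0, mul_zero]
  have hNk (k : ℝ) : N k ≠ 0 := by
    by_cases hka : k = a
    · rwa [hka]
    by_cases hkb : k = b
    · rwa [hkb]
    exact fun h0 => hm0 k hka hkb (by rw [hmN, h0, mul_zero])
  refine ⟨fun k => D k * (N k)⁻¹,
    (contDiff_ofReal_comp hD).mul ((contDiff_ofReal_comp hN).inv hNk), fun k => ?_⟩
  rw [hmN, hED]
  field_simp [hNk k]

/-- The entire extension of `symb`. -/
noncomputable def csymb (z : ℂ) : ℂ := dslope Complex.sin 0 (z / 2)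

theorem differentiable_csymb : Differentiable ℂ csymb :=
  (differentiable_dslope Complex.differentiable_sin 0).comp (differentiable_id.div_const 2)

theorem csymb_ofReal (k : ℝ) : csymb k = symb k := by
  rcases eq_or_ne k 0 with rfl | hk
  · simp [csymb, symb]
  · have hk2 : (k : ℂ) / 2 ≠ 0 := div_ne_zero (by exact_mod_cast hk) two_ne_zero
    simp [csymb, symb, hk, dslope_of_ne _ hk2, slope_def_field]

theorem contDiff_symb : ContDiff ℝ ∞ fun k => (symb k : ℂ) := by
  simpa only [csymb_ofReal] using contDiff_ofReal_comp differentiable_csymb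

theorem symb_neg (k : ℝ) : symb (-k) = symb k := by
  rw [symb, symb, neg_div 2 k, sin_neg, neg_div_neg_eq]
  simp only [neg_eq_zero]

theorem msymb_neg (c k : ℝ) : msymb c (-k) = msymb c k := by
  simp only [msymb, symb_neg]

/-- The spectral hypothesis on the wave speed: `±kc` are the only real zeros of `msymb c`, and
they are simple. -/
structure HasSimpleRoots (c kc : ℝ) : Prop where
  pos : 0 < kc
  symb_eq : symb kc = c
  deriv_ne_zero : deriv (msymb c) kc ≠ 0
  msymb_ne_zero : ∀ k : ℝ, k ≠ kc → k ≠ -kc → msymb c k ≠ 0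

namespace HasSimpleRoots

variable {c kc : ℝ}

theorem msymb_eq_zero (h : HasSimpleRoots c kc) : msymb c kc = 0 := by
  rw [msymb, h.symb_eq, sub_self]

theorem one_sub_sq_ne_zero (h : HasSimpleRoots c kc) : 1 - c ^ 2 ≠ 0 := by
  simpa [msymb, symb] using h.msymb_ne_zero 0 h.pos.ne (by linarith [h.pos])

theorem sin_half (h : HasSimpleRoots c kc) : sin (kc / 2) = c * (kc / 2) := by
  have hkc := h.pos
  rw [← h.symb_eq, symb, if_neg hkc.ne']
  field_simp

theorem hasDerivAt_msymb (h : HasSimpleRoots c kc) :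
    HasDerivAt (msymb c) (2 * c * ((cos (kc / 2) - c) / kc)) kc := by
  have hkc := h.pos
  have hquot : HasDerivAt (fun k : ℝ => sin (k / 2) / (k / 2)) ((cos (kc / 2) - c) / kc) kc := by
    have hhalf : HasDerivAt (fun k : ℝ => k / 2) (1 / 2) kc := (hasDerivAt_id kc).div_const 2
    refine (hhalf.sin.fun_div hhalf (by positivity)).congr_deriv ?_
    rw [h.sin_half]
    field_simp
  have hsymb : HasDerivAt symb ((cos (kc / 2) - c) / kc) kc := by
    refine hquot.congr_of_eventuallyEq ?_
    filter_upwards [eventually_ne_nhds hkc.ne'] with k hk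
    rw [symb, if_neg hk]
  refine ((hsymb.fun_pow 2).sub_const (c ^ 2)).congr_deriv ?_
  simp [h.symb_eq]

theorem speed_ne_zero (h : HasSimpleRoots c kc) : c ≠ 0 := fun hc =>
  h.deriv_ne_zero (by rw [h.hasDerivAt_msymb.deriv, hc, mul_zero, zero_mul])

theorem speed_ne_cos_half (h : HasSimpleRoots c kc) : c ≠ cos (kc / 2) := fun hc =>
  h.deriv_ne_zero (by rw [h.hasDerivAt_msymb.deriv, ← hc, sub_self, zero_div, mul_zero])

theorem exists_contDiff_mul_msymb_eq (h : HasSimpleRoots c kc) {E : ℂ → ℂ}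
    (hE : Differentiable ℂ E) (hEp : E kc = 0) (hEm : E (-kc) = 0) :
    ∃ q : ℝ → ℂ, ContDiff ℝ ∞ q ∧ ∀ k : ℝ, q k * msymb c k = E k := by
  let m : ℂ → ℂ := fun z => csymb z ^ 2 - c ^ 2
  have hm : Differentiable ℂ m := (differentiable_csymb.pow 2).sub_const _
  have hreal (k : ℝ) : m k = msymb c k := by simp [m, msymb, csymb_ofReal]
  have hderiv (k : ℝ) (hk : deriv (msymb c) k ≠ 0) : deriv m k ≠ 0 := fun h0 => hk <| by
    have hre := (h0 ▸ (hm k).hasDerivAt).real_of_complex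
    simp only [hreal, Complex.ofReal_re] at hre
    exact hre.deriv
  have hkm : deriv (msymb c) (-kc) ≠ 0 := fun h0 => h.deriv_ne_zero <| by
    rw [← neg_eq_zero, ← neg_neg kc, ← deriv_comp_neg]
    simpa only [msymb_neg] using h0
  have hzero : m kc = 0 := by rw [hreal, h.msymb_eq_zero, Complex.ofReal_zero]
  have hzero' : m (-kc : ℝ) = 0 := by
    rw [hreal, msymb_neg, h.msymb_eq_zero, Complex.ofReal_zero]
  simp only [← hreal]
  refine exists_contDiff_mul_eq_of_simple_zeros hm hE (by linarith [h.pos]) hzero hzero'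
    (hderiv kc h.deriv_ne_zero) (hderiv (-kc) hkm) (fun k hk hk' => ?_) hEp (by simpa using hEm)
  rw [hreal]
  exact_mod_cast h.msymb_ne_zero k hk hk'

end HasSimpleRoots

/-- `T` preserves bounded measurable functions and its transpose multiplies the spectrum of a
test function by the smooth function `p`. -/
structure HasSymbol (T : (ℝ → ℝ) → ℝ → ℝ) (p : ℝ → ℂ) : Prop where
  contDiff : ContDiff ℝ ∞ p
  isBoundedMeasurable : ∀ {U}, IsBoundedMeasurable U → IsBoundedMeasurable (T U)
  integral_mul_synth : ∀ {U h}, IsBoundedMeasurable U → IsTestSpectrum h →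
    ∫ y, (T U y : ℂ) * synth h y = ∫ y, (U y : ℂ) * synth (fun k => p k * h k) y

namespace HasSymbol

variable {T T' : (ℝ → ℝ) → ℝ → ℝ} {p p' : ℝ → ℂ}

theorem sub (hT : HasSymbol T p) (hT' : HasSymbol T' p') :
    HasSymbol (fun U x => T U x - T' U x) fun k => p k - p' k where
  contDiff := hT.contDiff.sub hT'.contDiff
  isBoundedMeasurable hU := (hT.isBoundedMeasurable hU).sub (hT'.isBoundedMeasurable hU)
  integral_mul_synth {U h} hU hh := by
    simp only [Complex.ofReal_sub, sub_mul,
      (hh.mul_left hT.contDiff).synth_sub (hh.mul_left hT'.contDiff), mul_sub]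
    rw [integral_sub ((hT.isBoundedMeasurable hU).integrable_mul hh.integrable_synth)
        ((hT'.isBoundedMeasurable hU).integrable_mul hh.integrable_synth),
      integral_sub (hU.integrable_mul (hh.mul_left hT.contDiff).integrable_synth)
        (hU.integrable_mul (hh.mul_left hT'.contDiff).integrable_synth),
      hT.integral_mul_synth hU hh, hT'.integral_mul_synth hU hh]

theorem const_mul (r : ℝ) (hT : HasSymbol T p) :
    HasSymbol (fun U x => r * T U x) fun k => r * p k where
  contDiff := contDiff_const.mul hT.contDiff
  isBoundedMeasurable hU := (hT.isBoundedMeasurable hU).const_mul r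
  integral_mul_synth {U h} hU hh := by
    simp only [Complex.ofReal_mul, mul_assoc, synth_const_mul, mul_left_comm _ (r : ℂ),
      integral_const_mul, hT.integral_mul_synth hU hh]

theorem comp (hT : HasSymbol T p) (hT' : HasSymbol T' p') :
    HasSymbol (fun U => T (T' U)) fun k => p' k * p k where
  contDiff := hT'.contDiff.mul hT.contDiff
  isBoundedMeasurable hU := hT.isBoundedMeasurable (hT'.isBoundedMeasurable hU)
  integral_mul_synth hU hh := by
    simp only [hT.integral_mul_synth (hT'.isBoundedMeasurable hU) hh,
      hT'.integral_mul_synth hU (hh.mul_left hT.contDiff), mul_assoc]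

theorem translation (s : ℝ) :
    HasSymbol (fun U x => U (x + s)) fun k => Complex.exp (-(Complex.I * k * s)) where
  contDiff := contDiff_ofReal_comp (f := fun z => Complex.exp (-(Complex.I * z * s))) (by fun_prop)
  isBoundedMeasurable hU := hU.comp_add_right s
  integral_mul_synth {U h} _ _ := by
    simp only [← synth_apply_sub]
    rw [← integral_add_right_eq_self (fun y => (U y : ℂ) * synth h (y - s)) s]
    simp only [add_sub_cancel_right]

protected theorem Aop : HasSymbol Aop fun k => symb k where
  contDiff := contDiff_symb
  isBoundedMeasurable hU := hU.Aop
  integral_mul_synth hU hh := by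
    simp only [integral_Aop_mul hU hh.integrable_synth hh.continuous_synth,
      integral_synth_sub_eq_synth_symb_mul hh]

protected theorem id : HasSymbol (fun U => U) fun _ => 1 where
  contDiff := contDiff_const
  isBoundedMeasurable hU := hU
  integral_mul_synth _ _ := by simp only [one_mul]

protected theorem Mop (c : ℝ) : HasSymbol (Mop c) fun k => msymb c k := by
  have hsymbol : (fun k => (msymb c k : ℂ)) =
        fun k => (symb k : ℂ) * symb k - ((c ^ 2 : ℝ) : ℂ) * 1 := by
    ext k
    simp [msymb, sq]
  rw [hsymbol]
  exact (HasSymbol.Aop.comp HasSymbol.Aop).sub (HasSymbol.id.const_mul (c ^ 2))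

theorem exists_integrable_integral_mul_synth_eq {q : ℝ → ℂ} (hT : HasSymbol T p)
    (hT' : HasSymbol T' p') (hq : ContDiff ℝ ∞ q) (hqp : ∀ k, q k * p' k = p k) {h : ℝ → ℂ}
    (hh : IsTestSpectrum h) :
    ∃ ψ : ℝ → ℂ, Integrable ψ ∧ ∀ U, IsBoundedMeasurable U →
      ∫ y, (T U y : ℂ) * synth h y = ∫ y, (T' U y : ℂ) * ψ y := by
  refine ⟨synth fun k => q k * h k, (hh.mul_left hq).integrable_synth, fun U hU => ?_⟩
  rw [hT.integral_mul_synth hU hh, hT'.integral_mul_synth hU (hh.mul_left hq)]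
  simp only [← hqp, mul_left_comm, mul_assoc]

end HasSymbol

theorem exists_isTestSpectrum_integral_synth_eq_one :
    ∃ h, IsTestSpectrum h ∧ ∫ x, synth h x = 1 := by
  let b : ContDiffBump (0 : ℝ) := ⟨1, 2, by norm_num, by norm_num⟩
  have hb : IsTestSpectrum fun k => ((2 * π : ℂ)⁻¹) * (b k : ℂ) :=
    IsTestSpectrum.mul_left ⟨b.hasCompactSupport.comp_left (g := fun r : ℝ => (r : ℂ)) (by simp),
      Complex.ofRealCLM.contDiff.comp b.contDiff⟩ contDiff_const
  refine ⟨_, hb, ?_⟩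
  have hb0 : b 0 = 1 := b.one_of_mem_closedBall (by simp [b])
  have hπ : (2 * π : ℂ) ≠ 0 := by exact_mod_cast two_pi_pos.ne'
  rw [hb.integral_synth, hb0, Complex.ofReal_one, mul_one, mul_inv_cancel₀ hπ]

theorem exists_isTestSpectrum_moment_le {ε : ℝ} (hε : 0 < ε) :
    ∃ h, IsTestSpectrum h ∧ ∫ x, synth h x = 1 ∧ ∫ x, |x| * ‖synth h x‖ ≤ ε := by
  obtain ⟨h, hh, h1⟩ := exists_isTestSpectrum_integral_synth_eq_one
  set J := ∫ x, |x| * ‖synth h x‖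
  have : 0 ≤ J := integral_nonneg fun x => by positivity
  obtain ⟨R, hR, hJR⟩ : ∃ R : ℝ, 0 < R ∧ J ≤ ε * R :=
    ⟨J / ε + 1, by positivity, by rw [mul_add, mul_div_cancel₀ J hε.ne']; linarith⟩
  refine ⟨_, hh.comp_div hR.ne', ?_, ?_⟩
  · simp only [synth_comp_div h hR]
    rw [integral_const_mul, Measure.integral_comp_mul_left, h1, abs_of_pos (inv_pos.2 hR),
      Complex.real_smul, mul_one]
    push_cast
    exact mul_inv_cancel₀ (by exact_mod_cast hR.ne')
  · have hscale (x : ℝ) : |x| * ‖synth (fun k => h (k / R)) x‖ = |R * x| * ‖synth h (R * x)‖ := by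
      rw [synth_comp_div h hR, norm_mul, Complex.norm_real, abs_mul, Real.norm_eq_abs]
      ring
    simp only [hscale]
    rw [Measure.integral_comp_mul_left (fun x => |x| * ‖synth h x‖), abs_of_pos (inv_pos.2 hR),
      smul_eq_mul, inv_mul_le_iff₀ hR, mul_comm R]
    exact hJR

theorem abs_sub_le_of_lipschitzWith {K : ℝ≥0} {F : ℝ → ℝ} (hF : LipschitzWith K F) (x y : ℝ) :
    |F x - F y| ≤ K * |x - y| := by
  simpa only [Real.dist_eq] using hF.dist_le_mul x y

theorem norm_sub_integral_mul_le {K : ℝ≥0} {F : ℝ → ℝ} (hF : LipschitzWith K F) {φ : ℝ → ℂ}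
    (hφ : Integrable φ) (hφ1 : ∫ y, φ y = 1) (hmoment : Integrable fun y => |y| * ‖φ y‖) (x : ℝ) :
    ‖(F x : ℂ) - ∫ y, (F (y + x) : ℂ) * φ y‖ ≤ K * ∫ y, |y| * ‖φ y‖ := by
  have hle (y : ℝ) : ‖((F x - F (y + x) : ℝ) : ℂ) * φ y‖ ≤ K * (|y| * ‖φ y‖) := by
    have hlip := abs_sub_le_of_lipschitzWith hF x (y + x)
    rw [show x - (y + x) = -y by ring, abs_neg] at hlip
    rw [norm_mul, Complex.norm_real, Real.norm_eq_abs, ← mul_assoc]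
    exact mul_le_mul_of_nonneg_right hlip (norm_nonneg _)
  have hc : Continuous fun y => ((F x - F (y + x) : ℝ) : ℂ) := by
    have := hF.continuous
    fun_prop
  have hint : Integrable fun y => ((F x - F (y + x) : ℝ) : ℂ) * φ y :=
    (hmoment.const_mul _).mono' (hc.aestronglyMeasurable.mul hφ.aestronglyMeasurable)
      (Eventually.of_forall hle)
  have hsplit : ∫ y, (F (y + x) : ℂ) * φ y
      = F x - ∫ y, ((F x - F (y + x) : ℝ) : ℂ) * φ y := by
    rw [← mul_one (F x : ℂ), ← hφ1, ← integral_const_mul, ← integral_sub (hφ.const_mul _) hint]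
    congr 1 with y
    push_cast
    ring
  rw [hsplit, sub_sub_cancel, ← integral_const_mul]
  exact norm_integral_le_of_norm_le (hmoment.const_mul _) (Eventually.of_forall hle)

/-! ### The rotation defect -/

/-- The deviation of `U (x + s)` from the value it would have if `U` were a combination of
`cos (kc * ·)` and `sin (kc * ·)`, that is, if passing from `x` to `x + s` rotated the pair
`(U x, U (x + π / (2 * kc)))` by the angle `kc * s`. -/
noncomputable def rotDefect (kc s : ℝ) (U : ℝ → ℝ) (x : ℝ) : ℝ :=
  U (x + s) - cos (kc * s) * U x - sin (kc * s) * U (x + π / (2 * kc))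

section RotDefect

variable {c kc : ℝ} {U : ℝ → ℝ}

theorem abs_sub_sub_le_three_mul {a b u v w M : ℝ} (ha : |a| ≤ 1) (hb : |b| ≤ 1)
    (hu : |u| ≤ M) (hv : |v| ≤ M) (hw : |w| ≤ M) : |u - a * v - b * w| ≤ 3 * M := by
  have hv' : |a * v| ≤ M := by
    rw [abs_mul]
    exact (mul_le_of_le_one_left (abs_nonneg v) ha).trans hv
  have hw' : |b * w| ≤ M := by
    rw [abs_mul]
    exact (mul_le_of_le_one_left (abs_nonneg w) hb).trans hw
  linarith [abs_sub (u - a * v) (b * w), abs_sub u (a * v)]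

theorem abs_rotDefect_le {B : ℝ} (hB : ∀ x, |U x| ≤ B) (kc s x : ℝ) :
    |rotDefect kc s U x| ≤ 3 * B :=
  abs_sub_sub_le_three_mul (abs_cos_le_one _) (abs_sin_le_one _) (hB _) (hB _) (hB _)

theorem lipschitzWith_rotDefect {K : ℝ≥0} (hU : LipschitzWith K U) (kc s : ℝ) :
    LipschitzWith (3 * K) (rotDefect kc s U) := by
  refine LipschitzWith.of_dist_le_mul fun x y => ?_
  have hshift (t : ℝ) : |U (x + t) - U (y + t)| ≤ K * |x - y| := by
    simpa using abs_sub_le_of_lipschitzWith hU (x + t) (y + t)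
  rw [Real.dist_eq, Real.dist_eq]
  convert abs_sub_sub_le_three_mul (abs_cos_le_one (kc * s)) (abs_sin_le_one (kc * s)) (hshift s)
    (abs_sub_le_of_lipschitzWith hU x y) (hshift (π / (2 * kc))) using 1
  · simp only [rotDefect]
    ring_nf
  · push_cast
    ring

theorem rotDefect_comp_add_right (kc s : ℝ) (U : ℝ → ℝ) (x : ℝ) :
    rotDefect kc s (fun y => U (y + x)) = fun y => rotDefect kc s U (y + x) := by
  ext y
  simp only [rotDefect, add_right_comm _ x]

/-- The entire extension of the symbol of `rotDefect kc s`. -/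
noncomputable def rotSymb (kc s : ℝ) (z : ℂ) : ℂ :=
  Complex.exp (-(Complex.I * z * s)) - cos (kc * s) * 1
    - sin (kc * s) * Complex.exp (-(Complex.I * z * (π / (2 * kc) : ℝ)))

theorem HasSymbol.rotDefect (kc s : ℝ) : HasSymbol (rotDefect kc s) fun k => rotSymb kc s k :=
  ((HasSymbol.translation s).sub (HasSymbol.id.const_mul (cos (kc * s)))).sub
    ((HasSymbol.translation (π / (2 * kc))).const_mul (sin (kc * s)))

theorem differentiable_rotSymb (kc s : ℝ) : Differentiable ℂ (rotSymb kc s) := by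
  unfold rotSymb
  fun_prop

theorem rotSymb_eq_zero_of_exp_eq (hkc : kc ≠ 0) (s : ℝ) {z σ : ℂ}
    (hexp : ∀ t : ℝ, Complex.exp (-(Complex.I * z * t)) = cos (kc * t) + σ * sin (kc * t)) :
    rotSymb kc s z = 0 := by
  have hquarter : kc * (π / (2 * kc)) = π / 2 := by field_simp
  rw [rotSymb, hexp, hexp, hquarter, cos_pi_div_two, sin_pi_div_two]
  push_cast
  ring

theorem rotSymb_self (hkc : kc ≠ 0) (s : ℝ) : rotSymb kc s kc = 0 := by
  refine rotSymb_eq_zero_of_exp_eq hkc s (σ := -Complex.I) fun t => ?_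
  rw [show -(Complex.I * kc * t) = ((-(kc * t) : ℝ) : ℂ) * Complex.I by push_cast; ring,
    Complex.exp_mul_I, ← Complex.ofReal_cos, ← Complex.ofReal_sin, cos_neg, sin_neg]
  push_cast
  ring

theorem rotSymb_neg_self (hkc : kc ≠ 0) (s : ℝ) : rotSymb kc s (-kc) = 0 := by
  refine rotSymb_eq_zero_of_exp_eq hkc s (σ := Complex.I) fun t => ?_
  rw [show -(Complex.I * -kc * t) = ((kc * t : ℝ) : ℂ) * Complex.I by push_cast; ring,
    Complex.exp_mul_I, ← Complex.ofReal_cos, ← Complex.ofReal_sin]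
  ring

theorem exists_integrable_norm_rotDefect_sub_le (h : HasSimpleRoots c kc) (s : ℝ) (K : ℝ≥0)
    {ε : ℝ} (hε : 0 < ε) :
    ∃ ψ : ℝ → ℂ, Integrable ψ ∧ ∀ U, IsBoundedMeasurable U → LipschitzWith K U → ∀ x,
      ‖(rotDefect kc s U x : ℂ) - ∫ y, (Mop c U (y + x) : ℂ) * ψ y‖ ≤ ε := by
  obtain ⟨q, hq, hqm⟩ := h.exists_contDiff_mul_msymb_eq (differentiable_rotSymb kc s)
    (rotSymb_self h.pos.ne' s) (rotSymb_neg_self h.pos.ne' s)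
  obtain ⟨h, hh, hh1, hmoment⟩ := exists_isTestSpectrum_moment_le
    (ε := ε / (3 * K + 1)) (by positivity)
  obtain ⟨ψ, hψ, hpair⟩ := (HasSymbol.rotDefect kc s).exists_integrable_integral_mul_synth_eq
    (HasSymbol.Mop c) hq hqm hh
  refine ⟨ψ, hψ, fun U hU hK x => ?_⟩
  have hpair_x := hpair _ (hU.comp_add_right x)
  rw [rotDefect_comp_add_right, Mop_comp_add_right] at hpair_x
  rw [← hpair_x]
  calc _ ≤ ((3 * K : ℝ≥0) : ℝ) * ∫ y, |y| * ‖synth h y‖ :=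
        norm_sub_integral_mul_le (lipschitzWith_rotDefect hK kc s) hh.integrable_synth hh1
          hh.integrable_abs_mul_norm_synth x
    _ ≤ (3 * K + 1) * (ε / (3 * K + 1)) := by
        push_cast
        gcongr
        linarith
    _ = ε := mul_div_cancel₀ ε (by positivity)

theorem rotDefect_eq_zero_of_Mop_eq_zero (h : HasSimpleRoots c kc) (hU : IsBoundedMeasurable U)
    {K : ℝ≥0} (hK : LipschitzWith K U) (hM : ∀ x, Mop c U x = 0) (s x : ℝ) :
    rotDefect kc s U x = 0 := by
  refine abs_nonpos_iff.1 (le_of_forall_pos_le_add fun ε hε => ?_)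
  obtain ⟨ψ, -, hψ⟩ := exists_integrable_norm_rotDefect_sub_le h s K hε
  simpa [hM] using hψ U hU hK x

theorem tendsto_rotDefect_of_tendsto_Mop (h : HasSimpleRoots c kc) (hU : IsBoundedMeasurable U)
    {K : ℝ≥0} (hK : LipschitzWith K U) (hM : Tendsto (Mop c U) atTop (𝓝 0)) (s : ℝ) :
    Tendsto (rotDefect kc s U) atTop (𝓝 0) := by
  rw [Metric.tendsto_nhds]
  intro ε hε
  obtain ⟨ψ, hψ, hest⟩ := exists_integrable_norm_rotDefect_sub_le h s K (half_pos hε)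
  have hMU := (HasSymbol.Mop c).isBoundedMeasurable hU
  obtain ⟨B, hB⟩ := hMU.bounded
  have hlim : Tendsto (fun x => ∫ y, (Mop c U (y + x) : ℂ) * ψ y) atTop (𝓝 (∫ _ : ℝ, (0 : ℂ))) := by
    refine tendsto_integral_filter_of_dominated_convergence (fun y => B * ‖ψ y‖)
      (Eventually.of_forall fun x =>
        ((hMU.comp_add_right x).integrable_mul hψ).aestronglyMeasurable)
      (Eventually.of_forall fun x => Eventually.of_forall fun y => ?_)
      (hψ.norm.const_mul _) (Eventually.of_forall fun y => ?_)
    · rw [norm_mul, Complex.norm_real]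
      exact mul_le_mul_of_nonneg_right (hB _) (norm_nonneg _)
    · have hshift := hM.comp (tendsto_atTop_add_const_left atTop y tendsto_id)
      simpa using ((Complex.continuous_ofReal.tendsto 0).comp hshift).mul_const (ψ y)
  rw [integral_zero, Metric.tendsto_nhds] at hlim
  filter_upwards [hlim (ε / 2) (half_pos hε)] with x hx
  rw [dist_zero_right] at hx ⊢
  rw [← Complex.norm_real]
  linarith [norm_le_norm_sub_add (rotDefect kc s U x : ℂ) (∫ y, (Mop c U (y + x) : ℂ) * ψ y),
    hest U hU hK x]

theorem eq_zero_of_Mop_eq_const (h : HasSimpleRoots c kc) {T : ℝ → ℝ}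
    (hT : IsBoundedMeasurable T) {K : ℝ≥0} (hK : LipschitzWith K T) {η l : ℝ}
    (hM : ∀ x, Mop c T x = η) (hlim : Tendsto T atTop (𝓝 l)) (hT0 : T 0 = 0) (x : ℝ) :
    T x = 0 := by
  set μ := η / (1 - c ^ 2)
  set U : ℝ → ℝ := fun x => T x - μ
  have hU : IsBoundedMeasurable U := hT.sub ⟨measurable_const, |μ|, fun _ => le_rfl⟩
  have hMU (x : ℝ) : Mop c U x = 0 := by
    rw [Mop_sub c hT.locallyIntegrable (locallyIntegrable_const μ), Mop_const]
    simp only [hM, μ, mul_div_cancel₀ η h.one_sub_sq_ne_zero, sub_self]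
  have hrot := rotDefect_eq_zero_of_Mop_eq_zero h hU
    (K := K) (by simpa using hK.sub (LipschitzWith.const μ)) hMU
  have hkc := h.pos
  have hanti (x : ℝ) : U (x + π / kc) = -U x := by
    have := hrot (π / kc) x
    rw [rotDefect, mul_div_cancel₀ π hkc.ne', cos_pi, sin_pi] at this
    linarith
  have hUlim : Tendsto U atTop (𝓝 (l - μ)) := hlim.sub_const μ
  have hl : l - μ = 0 := by
    have hshift := hUlim.comp (tendsto_atTop_add_const_right atTop (π / kc) tendsto_id)
    simp only [Function.comp_def, id, hanti] at hshift
    linarith [tendsto_nhds_unique hshift hUlim.neg]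
  have hperiodic (n : ℕ) (x : ℝ) : U (x + n * (2 * (π / kc))) = U x :=
    Function.Periodic.nat_mul (fun y => by rw [two_mul, ← add_assoc, hanti, hanti, neg_neg]) n x
  have hzero (x : ℝ) : U x = 0 := by
    have hshift : Tendsto (fun n : ℕ => x + n * (2 * (π / kc))) atTop atTop :=
      tendsto_atTop_add_const_left _ x
        (tendsto_natCast_atTop_atTop.atTop_mul_const (by positivity))
    have := hUlim.comp hshift
    simp only [Function.comp_def, hperiodic, hl] at this
    exact tendsto_nhds_unique tendsto_const_nhds this
  have hμ : μ = 0 := by simpa [U, hT0] using hzero 0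
  simpa [U, hμ] using hzero x

end RotDefect

/-! ### Asymptotic oscillations -/

/-- The bilinear flux conserved by pairs of solutions of `Aop F = c * F`. -/
noncomputable def flux (c : ℝ) (v F : ℝ → ℝ) (x : ℝ) : ℝ :=
  c * (v x * F x)
    - ∫ t in (-1 / 2 : ℝ)..0, (v (x + t) * F (x + t + 1 / 2) + v (x + t + 1 / 2) * F (x + t))

section Flux

variable {c : ℝ} {v F G : ℝ → ℝ}

theorem hasDerivAt_of_Aop_eq_mul (hc : c ≠ 0) (hF : Continuous F) {a : ℝ}
    (hA : ∀ x, a < x → Aop F x = c * F x) {x : ℝ} (hx : a < x) :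
    HasDerivAt F ((F (x + 1 / 2) - F (x - 1 / 2)) / c) x := by
  refine ((hasDerivAt_Aop hF x).div_const c).congr_of_eventuallyEq ?_
  filter_upwards [lt_mem_nhds hx] with y hy
  rw [hA y hy, mul_div_cancel_left₀ _ hc]

theorem hasDerivAt_flux (hc : c ≠ 0) (hv : Continuous v) (hF : Continuous F) {a : ℝ}
    (hAv : ∀ x, a < x → Aop v x = c * v x) (hAF : ∀ x, a < x → Aop F x = c * F x) {x : ℝ}
    (hx : a < x) : HasDerivAt (flux c v F) 0 x := by
  have hprod := ((hasDerivAt_of_Aop_eq_mul hc hv hAv hx).mul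
    (hasDerivAt_of_Aop_eq_mul hc hF hAF hx)).const_mul c
  have hint := hasDerivAt_integral_comp_add
    (F := fun y => v y * F (y + 1 / 2) + v (y + 1 / 2) * F y) (by fun_prop) (-1 / 2) 0 x
  refine (hprod.sub hint).congr_deriv ?_
  rw [show x + -1 / 2 = x - 1 / 2 by ring, sub_add_cancel, add_zero]
  field_simp
  ring

theorem flux_eq_flux (hc : c ≠ 0) (hv : Continuous v) (hF : Continuous F) {a : ℝ}
    (hAv : ∀ x, a < x → Aop v x = c * v x) (hAF : ∀ x, a < x → Aop F x = c * F x) {x y : ℝ}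
    (hx : a < x) (hy : a < y) : flux c v F x = flux c v F y :=
  isOpen_Ioi.is_const_of_deriv_eq_zero isPreconnected_Ioi
    (fun _ hz => (hasDerivAt_flux hc hv hF hAv hAF hz).differentiableAt.differentiableWithinAt)
    (fun _ hz => (hasDerivAt_flux hc hv hF hAv hAF hz).deriv) hx hy

theorem flux_comp_add_right (c : ℝ) (v F : ℝ → ℝ) (s x : ℝ) :
    flux c (fun y => v (y + s)) (fun y => F (y + s)) x = flux c v F (x + s) := by
  simp only [flux, add_right_comm _ _ s]

theorem flux_comm (c : ℝ) (v F : ℝ → ℝ) : flux c v F = flux c F v := by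
  ext x
  simp only [flux]
  congr 2
  · ring
  · ext t
    ring

theorem flux_const_mul_right (c r : ℝ) (v F : ℝ → ℝ) (x : ℝ) :
    flux c v (fun y => r * F y) x = r * flux c v F x := by
  rw [flux, flux, mul_sub, ← intervalIntegral.integral_const_mul]
  congr 1
  · ring
  · congr 1 with t
    ring

theorem flux_add_right (hv : Continuous v) (hF : Continuous F) (hG : Continuous G) (x : ℝ) :
    flux c v (fun y => F y + G y) x = flux c v F x + flux c v G x := by
  have hint {F : ℝ → ℝ} (hF : Continuous F) : IntervalIntegrable
      (fun t => v (x + t) * F (x + t + 1 / 2) + v (x + t + 1 / 2) * F (x + t))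
      volume (-1 / 2) 0 := by
    apply Continuous.intervalIntegrable
    fun_prop
  rw [flux, flux, flux, sub_add_sub_comm, ← intervalIntegral.integral_add (hint hF) (hint hG)]
  congr 2
  · ring
  · ext t
    ring

theorem tendsto_flux_zero {F : ℝ → ℝ → ℝ} {b B : ℝ} (hv : Continuous v) (hb : ∀ y, |v y| ≤ b)
    (hF : ∀ x, Continuous (F x)) (hB : ∀ x y, |F x y| ≤ B)
    (hlim : ∀ y, Tendsto (fun x => F x y) atTop (𝓝 0)) (z : ℝ) :
    Tendsto (fun x => flux c v (F x) z) atTop (𝓝 0) := by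
  have hb0 : 0 ≤ b := (abs_nonneg _).trans (hb 0)
  have hmul (x y y' : ℝ) : |v y * F x y'| ≤ b * B := by
    rw [abs_mul]
    exact mul_le_mul (hb y) (hB x y') (abs_nonneg _) hb0
  have hint := intervalIntegral.tendsto_integral_filter_of_dominated_convergence (μ := volume)
    (a := -1 / 2) (b := 0) (l := atTop)
    (F := fun x t => v (z + t) * F x (z + t + 1 / 2) + v (z + t + 1 / 2) * F x (z + t))
    (f := fun _ => 0) (fun _ => b * B + b * B)
    (Eventually.of_forall fun x => by
      have := hF x
      exact Continuous.aestronglyMeasurable (by fun_prop))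
    (Eventually.of_forall fun x => Eventually.of_forall fun t _ =>
      (abs_add_le _ _).trans (add_le_add (hmul _ _ _) (hmul _ _ _)))
    intervalIntegrable_const
    (Eventually.of_forall fun t _ => by
      simpa using ((hlim (z + t + 1 / 2)).const_mul (v (z + t))).add
        ((hlim (z + t)).const_mul (v (z + t + 1 / 2))))
  simpa [flux] using (((hlim z).const_mul (v z)).const_mul c).sub hint

end Flux

/-- The sinusoid `α cos(k x) + β sin(k x)`; for `k = kc` these span the oscillatory kernel of
`Mop c`. -/
noncomputable def sinusoid (k α β x : ℝ) : ℝ := α * cos (k * x) + β * sin (k * x)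

section Sinusoid

variable (k α β : ℝ)

theorem continuous_sinusoid : Continuous (sinusoid k α β) := by
  unfold sinusoid
  fun_prop

theorem abs_sinusoid_le (x : ℝ) : |sinusoid k α β x| ≤ |α| + |β| := by
  refine (abs_add_le _ _).trans (add_le_add ?_ ?_) <;> rw [abs_mul]
  · exact mul_le_of_le_one_right (abs_nonneg α) (abs_cos_le_one _)
  · exact mul_le_of_le_one_right (abs_nonneg β) (abs_sin_le_one _)

theorem lipschitzWith_sinusoid :
    LipschitzWith (‖α‖₊ * (1 * ‖k‖₊) + ‖β‖₊ * (1 * ‖k‖₊)) (sinusoid k α β) :=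
  ((lipschitzWith_smul α).comp (lipschitzWith_cos.comp (lipschitzWith_smul k))).add
    ((lipschitzWith_smul β).comp (lipschitzWith_sin.comp (lipschitzWith_smul k)))

end Sinusoid

section Asymptotics

variable {c kc : ℝ} {F : ℝ → ℝ} {K : ℝ≥0}

theorem Mop_eq_zero_of_Aop_eq_mul {a : ℝ} (hA : ∀ x, a < x → Aop F x = c * F x) {x : ℝ}
    (hx : a + 1 / 2 < x) : Mop c F x = 0 := by
  have hAA : Aop (Aop F) x = c * Aop F x := by
    rw [Aop, Aop, ← intervalIntegral.integral_const_mul]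
    refine intervalIntegral.integral_congr fun y hy => hA y ?_
    rw [Set.uIcc_of_le (by linarith)] at hy
    linarith [hy.1]
  rw [Mop, hAA, hA x (by linarith)]
  ring

theorem Aop_factor_eq_mul (hF : LocallyIntegrable F) (x : ℝ) (hM : Mop c F x = 0) :
    Aop (fun y => Aop F y - -c * F y) x = c * (Aop F x - -c * F x) := by
  rw [Aop_sub (G := fun y => -c * F y) (continuous_Aop hF).locallyIntegrable (hF.smul (-c)),
    Aop_const_mul]
  simp only [Mop] at hM
  linear_combination hM

theorem cos_mul_flux_add_sin_mul_flux (kc : ℝ) (hF : Continuous F) (x : ℝ) :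
    cos (kc * x) * flux c (fun y => cos (kc * y)) F x
        + sin (kc * x) * flux c (fun y => sin (kc * y)) F x
      = flux c (fun y => cos (kc * y)) (fun y => F (y + x)) 0 := by
  have hshift := flux_comp_add_right c (fun y => cos (kc * (y - x))) F x 0
  have hcos : (fun y => cos (kc * (y - x)))
      = fun y => cos (kc * x) * cos (kc * y) + sin (kc * x) * sin (kc * y) := by
    ext y
    rw [mul_sub, cos_sub]
    ring
  simp only [add_sub_cancel_right, zero_add] at hshift
  rw [hshift, hcos, flux_comm c _ F, flux_comm c _ F, flux_comm c _ F,
    flux_add_right hF (by fun_prop) (by fun_prop), flux_const_mul_right, flux_const_mul_right]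

namespace HasSimpleRoots

theorem Aop_cos (h : HasSimpleRoots c kc) :
    Aop (fun y => cos (kc * y)) = fun y => c * cos (kc * y) := by
  have hkc := h.pos.ne'
  have hderiv (y : ℝ) : HasDerivAt (fun y => sin (kc * y) / kc) (cos (kc * y)) y := by
    simpa [hkc] using (hasDerivAt_const_mul kc (x := y)).sin.div_const kc
  ext x
  rw [Aop_deriv hderiv (by fun_prop), mul_add, mul_sub, mul_one_div, sin_add, sin_sub, h.sin_half]
  field_simp
  ring

theorem Aop_sin (h : HasSimpleRoots c kc) :
    Aop (fun y => sin (kc * y)) = fun y => c * sin (kc * y) := by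
  have hkc := h.pos.ne'
  have hderiv (y : ℝ) : HasDerivAt (fun y => -cos (kc * y) / kc) (sin (kc * y)) y := by
    simpa [hkc] using (hasDerivAt_const_mul kc (x := y)).cos.neg.div_const kc
  ext x
  rw [Aop_deriv hderiv (by fun_prop), mul_add, mul_sub, mul_one_div, cos_add, cos_sub, h.sin_half]
  field_simp
  ring

theorem Mop_sinusoid (h : HasSimpleRoots c kc) (α β x : ℝ) : Mop c (sinusoid kc α β) x = 0 := by
  have hsub : sinusoid kc α β = fun x => α * cos (kc * x) - -β * sin (kc * x) := by
    ext x
    rw [sinusoid]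
    ring
  refine Mop_eq_zero_of_Aop_eq_mul (a := x - 1) (fun y _ => ?_) (by linarith)
  rw [hsub, Aop_sub (Continuous.locallyIntegrable (by fun_prop))
    (Continuous.locallyIntegrable (by fun_prop)), Aop_const_mul, Aop_const_mul, h.Aop_cos,
    h.Aop_sin]
  ring

theorem flux_cos_cos (h : HasSimpleRoots c kc) :
    flux c (fun y => cos (kc * y)) (fun y => cos (kc * y)) 0 = (c - cos (kc / 2)) / 2 := by
  have hsum (t : ℝ) : cos (kc * (0 + t)) * cos (kc * (0 + t + 1 / 2))
      + cos (kc * (0 + t + 1 / 2)) * cos (kc * (0 + t))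
      = cos (kc * (2 * t + 1 / 2)) + cos (kc / 2) := by
    rw [show kc * (2 * t + 1 / 2) = kc * (0 + t) + kc * (0 + t + 1 / 2) by ring,
      show kc / 2 = kc * (0 + t + 1 / 2) - kc * (0 + t) by ring, cos_add, cos_sub]
    ring
  have hint : ∫ t in (-1 / 2 : ℝ)..0, cos (kc * (2 * t + 1 / 2)) = c / 2 := by
    rw [intervalIntegral.integral_comp_mul_add (fun s => cos (kc * s)) two_ne_zero]
    have h0 := congrFun h.Aop_cos 0
    rw [Aop_eq_integral_comp_add] at h0
    norm_num at h0 ⊢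
    linarith
  rw [flux]
  simp only [hsum]
  rw [intervalIntegral.integral_add (Continuous.intervalIntegrable (by fun_prop) _ _)
    intervalIntegrable_const, hint]
  norm_num
  ring

theorem flux_cos_sin (h : HasSimpleRoots c kc) :
    flux c (fun y => cos (kc * y)) (fun y => sin (kc * y)) 0 = 0 := by
  have hsum (t : ℝ) : cos (kc * (0 + t)) * sin (kc * (0 + t + 1 / 2))
      + cos (kc * (0 + t + 1 / 2)) * sin (kc * (0 + t)) = sin (kc * (2 * t + 1 / 2)) := by
    rw [show kc * (2 * t + 1 / 2) = kc * (0 + t) + kc * (0 + t + 1 / 2) by ring, sin_add]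
    ring
  rw [flux]
  simp only [hsum]
  rw [intervalIntegral.integral_comp_mul_add (fun s => sin (kc * s)) two_ne_zero]
  have h0 := congrFun h.Aop_sin 0
  rw [Aop_eq_integral_comp_add] at h0
  norm_num at h0 ⊢
  linarith

theorem flux_cos_comp_add (h : HasSimpleRoots c kc) (hF : Continuous F) (x : ℝ) :
    flux c (fun y => cos (kc * y)) (fun y => F (y + x)) 0
      = (c - cos (kc / 2)) / 2 * F x
        + flux c (fun y => cos (kc * y)) (fun y => rotDefect kc y F x) 0 := by
  have hsplit : (fun y => F (y + x)) = fun y => (F x * cos (kc * y)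
      + F (x + π / (2 * kc)) * sin (kc * y)) + rotDefect kc y F x := by
    ext y
    rw [rotDefect, add_comm y x]
    ring
  rw [hsplit, flux_add_right (by fun_prop) (by fun_prop) (by unfold rotDefect; fun_prop),
    flux_add_right (by fun_prop) (by fun_prop) (by fun_prop), flux_const_mul_right,
    flux_const_mul_right, h.flux_cos_cos, h.flux_cos_sin]
  ring

theorem exists_tendsto_sub_of_Aop_eq_mul (h : HasSimpleRoots c kc) (hF : IsBoundedMeasurable F)
    (hK : LipschitzWith K F) {a : ℝ} (hA : ∀ x, a < x → Aop F x = c * F x) :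
    ∃ α β, Tendsto (fun x => F x - sinusoid kc α β x) atTop (𝓝 0) := by
  have hc := h.speed_ne_zero
  set κ := (c - cos (kc / 2)) / 2
  have hκ : κ ≠ 0 := div_ne_zero (sub_ne_zero.2 h.speed_ne_cos_half) two_ne_zero
  obtain ⟨B, hB⟩ := hF.bounded
  have hflux : Tendsto (fun x => flux c (fun y => cos (kc * y)) (fun y => rotDefect kc y F x) 0)
      atTop (𝓝 0) := by
    have hM : Tendsto (Mop c F) atTop (𝓝 0) := by
      refine tendsto_const_nhds.congr' ?_
      filter_upwards [eventually_gt_atTop (a + 1 / 2)] with x hx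
      exact (Mop_eq_zero_of_Aop_eq_mul hA hx).symm
    refine tendsto_flux_zero (by fun_prop) (fun y => abs_cos_le_one _) (fun x => ?_)
      (fun x y => abs_rotDefect_le hB kc y x) (tendsto_rotDefect_of_tendsto_Mop h hF hK hM) 0
    have := hK.continuous
    unfold rotDefect
    fun_prop
  have hcos (x : ℝ) (hx : a < x) := flux_eq_flux hc (v := fun y => cos (kc * y)) (by fun_prop)
    hK.continuous (fun y _ => congrFun h.Aop_cos y) hA hx (lt_add_one a)
  have hsin (x : ℝ) (hx : a < x) := flux_eq_flux hc (v := fun y => sin (kc * y)) (by fun_prop)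
    hK.continuous (fun y _ => congrFun h.Aop_sin y) hA hx (lt_add_one a)
  refine ⟨flux c (fun y => cos (kc * y)) F (a + 1) / κ,
    flux c (fun y => sin (kc * y)) F (a + 1) / κ, ?_⟩
  have hlim := (hflux.div_const κ).neg
  rw [zero_div, neg_zero] at hlim
  refine hlim.congr' ?_
  filter_upwards [eventually_gt_atTop a] with x hx
  have hsum := (cos_mul_flux_add_sin_mul_flux kc hK.continuous x).trans
    (h.flux_cos_comp_add hK.continuous x)
  rw [hcos x hx, hsin x hx] at hsum
  simp only [sinusoid]
  field_simp
  linear_combination hsum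

theorem tendsto_Aop_sub_mul (h : HasSimpleRoots c kc) (hF : IsBoundedMeasurable F)
    (hK : LipschitzWith K F) (hM : Tendsto (Mop c F) atTop (𝓝 0)) :
    Tendsto (fun x => Aop F x - c * F x) atTop (𝓝 0) := by
  obtain ⟨B, hB⟩ := hF.bounded
  have hcont := hK.continuous
  have hcos : ∫ t in (-1 / 2 : ℝ)..(1 / 2), cos (kc * t) = c := by
    simpa [Aop_eq_integral_comp_add] using congrFun h.Aop_cos 0
  have hsin : ∫ t in (-1 / 2 : ℝ)..(1 / 2), sin (kc * t) = 0 := by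
    simpa [Aop_eq_integral_comp_add] using congrFun h.Aop_sin 0
  have hdefect (x : ℝ) : Aop F x - c * F x = ∫ t in (-1 / 2 : ℝ)..(1 / 2), rotDefect kc t F x := by
    simp only [rotDefect]
    rw [intervalIntegral.integral_sub, intervalIntegral.integral_sub,
      intervalIntegral.integral_mul_const, intervalIntegral.integral_mul_const, hcos, hsin,
      ← Aop_eq_integral_comp_add, zero_mul, sub_zero]
    all_goals exact Continuous.intervalIntegrable (by fun_prop) _ _
  simp only [hdefect]
  have hlim := intervalIntegral.tendsto_integral_filter_of_dominated_convergence (μ := volume)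
    (a := -1 / 2) (b := 1 / 2) (l := atTop) (F := fun x t => rotDefect kc t F x)
    (f := fun _ => 0) (fun _ => 3 * B)
    (Eventually.of_forall fun x => Continuous.aestronglyMeasurable (by unfold rotDefect; fun_prop))
    (Eventually.of_forall fun x => Eventually.of_forall fun t _ => abs_rotDefect_le hB kc t x)
    intervalIntegrable_const
    (Eventually.of_forall fun t _ => tendsto_rotDefect_of_tendsto_Mop h hF hK hM t)
  simpa using hlim

theorem exists_tendsto_sub_of_Mop_eq_zero (h : HasSimpleRoots c kc) (hF : IsBoundedMeasurable F)
    (hK : LipschitzWith K F) {a : ℝ} (hM : ∀ x, a < x → Mop c F x = 0) :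
    ∃ α β, Tendsto (fun x => F x - sinusoid kc α β x) atTop (𝓝 0) := by
  obtain ⟨B, hB⟩ := hF.bounded
  have hB0 : 0 ≤ B := (abs_nonneg _).trans (hB 0)
  lift B to ℝ≥0 using hB0
  have hlip : LipschitzWith (2 * B + ‖-c‖₊ * K) fun x => Aop F x - -c * F x :=
    (lipschitzWith_Aop hF.locallyIntegrable hB).sub ((lipschitzWith_smul (-c)).comp hK)
  obtain ⟨α, β, hlim⟩ := h.exists_tendsto_sub_of_Aop_eq_mul (hF.Aop.sub (hF.const_mul (-c))) hlip
    fun x hx => Aop_factor_eq_mul hF.locallyIntegrable x (hM x hx)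
  have hMlim : Tendsto (Mop c F) atTop (𝓝 0) := by
    refine tendsto_const_nhds.congr' ?_
    filter_upwards [eventually_gt_atTop a] with x hx
    exact (hM x hx).symm
  have hc := h.speed_ne_zero
  refine ⟨α / (2 * c), β / (2 * c), ?_⟩
  have := (hlim.sub (h.tendsto_Aop_sub_mul hF hK hMlim)).div_const (2 * c)
  rw [sub_zero, zero_div] at this
  refine this.congr fun x => ?_
  simp only [sinusoid]
  field_simp
  ring

end HasSimpleRoots

end Asymptotics

/-! ### Profiles with a steep zero -/

/-- `F` vanishes at `0`, has slope more than `d` on `(-x₀, x₀)`, and stays at distance more than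
`r` from `0`, with the sign of its argument, outside `[-x₀, x₀]`. -/
structure SteepZero (F : ℝ → ℝ) (x₀ r d : ℝ) : Prop where
  differentiable : Differentiable ℝ F
  map_zero : F 0 = 0
  pos_width : 0 < x₀
  pos_gap : 0 < r
  pos_slope : 0 < d
  lt_right : ∀ x, x₀ < x → r < F x
  lt_left : ∀ x, x < -x₀ → F x < -r
  lt_deriv : ∀ x, |x| < x₀ → d < deriv F x

namespace SteepZero

variable {F S : ℝ → ℝ} {x₀ r d : ℝ}

theorem neg_comp_neg (hF : SteepZero F x₀ r d) : SteepZero (fun x => -F (-x)) x₀ r d where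
  differentiable := (hF.differentiable.comp differentiable_neg).neg
  map_zero := by rw [neg_zero, hF.map_zero, neg_zero]
  pos_width := hF.pos_width
  pos_gap := hF.pos_gap
  pos_slope := hF.pos_slope
  lt_right x hx := by linarith [hF.lt_left (-x) (by linarith)]
  lt_left x hx := by linarith [hF.lt_right (-x) (by linarith)]
  lt_deriv x hx := by
    rw [deriv.fun_neg, deriv_comp_neg, neg_neg]
    exact hF.lt_deriv (-x) (by rwa [abs_neg])

theorem add (hF : SteepZero F x₀ r d) (hS : Differentiable ℝ S) (hS0 : S 0 = 0)
    (hle : ∀ x, |S x| ≤ r / 2) (hle' : ∀ x, |deriv S x| ≤ d / 2) :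
    SteepZero (fun x => F x + S x) x₀ (r / 2) (d / 2) where
  differentiable := hF.differentiable.add hS
  map_zero := by rw [hF.map_zero, hS0, add_zero]
  pos_width := hF.pos_width
  pos_gap := half_pos hF.pos_gap
  pos_slope := half_pos hF.pos_slope
  lt_right x hx := by linarith [hF.lt_right x hx, (abs_le.1 (hle x)).1]
  lt_left x hx := by linarith [hF.lt_left x hx, (abs_le.1 (hle x)).2]
  lt_deriv x hx := by
    rw [deriv_fun_add (hF.differentiable x) (hS x)]
    linarith [hF.lt_deriv x hx, (abs_le.1 (hle' x)).1]

theorem min_le_of_nonneg (hF : SteepZero F x₀ r d) {x : ℝ} (hx : 0 ≤ x) :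
    min r (d * x) ≤ F x := by
  rcases le_or_gt x x₀ with hxx | hxx
  · have hmvt := (convex_Icc 0 x₀).mul_sub_le_image_sub_of_le_deriv
      hF.differentiable.continuous.continuousOn hF.differentiable.differentiableOn (C := d)
      (fun y hy => by
        rw [interior_Icc] at hy
        exact (hF.lt_deriv y (abs_lt.2 ⟨by linarith [hy.1, hy.2], hy.2⟩)).le)
      0 ⟨le_rfl, hF.pos_width.le⟩ x ⟨hx, hxx⟩ hx
    rw [hF.map_zero, sub_zero, sub_zero] at hmvt
    exact (min_le_right _ _).trans hmvt
  · exact (min_le_left _ _).trans (hF.lt_right x hxx).le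

theorem pos_of_pos (hF : SteepZero F x₀ r d) {x : ℝ} (hx : 0 < x) : 0 < F x :=
  (lt_min hF.pos_gap (mul_pos hF.pos_slope hx)).trans_le (hF.min_le_of_nonneg hx.le)

theorem neg_of_neg (hF : SteepZero F x₀ r d) {x : ℝ} (hx : x < 0) : F x < 0 := by
  simpa using hF.neg_comp_neg.pos_of_pos (neg_pos.2 hx)

theorem sign_apply (hF : SteepZero F x₀ r d) (x : ℝ) : sign (F x) = sign x := by
  rcases lt_trichotomy x 0 with hx | rfl | hx
  · rw [sign_of_neg hx, sign_of_neg (hF.neg_of_neg hx)]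
  · rw [hF.map_zero]
  · rw [sign_of_pos hx, sign_of_pos (hF.pos_of_pos hx)]

theorem min_le_abs (hF : SteepZero F x₀ r d) (x : ℝ) : min r (d * |x|) ≤ |F x| := by
  rcases le_total 0 x with hx | hx
  · rw [abs_of_nonneg hx]
    exact (hF.min_le_of_nonneg hx).trans (le_abs_self _)
  · rw [abs_of_nonpos hx]
    exact (hF.neg_comp_neg.min_le_of_nonneg (neg_nonneg.2 hx)).trans
      (by simpa using neg_le_abs (F x))

theorem le_abs_of_le_abs (hF : SteepZero F x₀ r d) {δ x : ℝ} (hδ : δ ≤ r) (hx : δ / d ≤ |x|) :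
    δ ≤ |F x| :=
  (le_min hδ ((div_le_iff₀' hF.pos_slope).1 hx)).trans (hF.min_le_abs x)

theorem exists_crossing (hF : SteepZero F x₀ r d) {δ : ℝ} (hδ : 0 < δ) (hδr : δ < r) :
    ∃ x₁, 0 < x₁ ∧ x₁ ≤ δ / d ∧ F x₁ = δ ∧ ∀ x, x₁ < x → δ < F x := by
  have hx₀ := hF.pos_width
  have hcont := hF.differentiable.continuous
  obtain ⟨x₁, hx₁, hFx₁⟩ : δ ∈ F '' Set.Icc 0 (x₀ + 1) :=
    intermediate_value_Icc (by linarith) hcont.continuousOn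
      ⟨hF.map_zero.trans_le hδ.le, by linarith [hF.lt_right (x₀ + 1) (by linarith)]⟩
  have hmono : StrictMonoOn F (Set.Icc 0 x₀) :=
    strictMonoOn_of_deriv_pos (convex_Icc 0 x₀) hcont.continuousOn fun x hx => by
      rw [interior_Icc] at hx
      exact hF.pos_slope.trans (hF.lt_deriv x (abs_lt.2 ⟨by linarith [hx.1], hx.2⟩))
  refine ⟨x₁, hx₁.1.lt_of_ne ?_, ?_, hFx₁, fun x hx => ?_⟩
  · rintro rfl
    exact hδ.ne (hF.map_zero.symm.trans hFx₁)
  · rcases min_le_iff.1 ((hF.min_le_of_nonneg hx₁.1).trans_eq hFx₁) with h | h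
    · exact absurd h hδr.not_ge
    · rwa [le_div_iff₀' hF.pos_slope]
  · rcases le_or_gt x x₀ with hxx | hxx
    · rw [← hFx₁]
      exact hmono ⟨hx₁.1, hx.le.trans hxx⟩ ⟨hx₁.1.trans hx.le, hxx⟩ hx
    · exact hδr.trans (hF.lt_right x hxx)

end SteepZero

theorem measurable_sign : Measurable sign :=
  Measurable.ite measurableSet_Iio measurable_const
    (Measurable.ite measurableSet_Ioi measurable_const measurable_const)

theorem abs_sign_le_one (x : ℝ) : |sign x| ≤ 1 := by
  obtain h | h | h := sign_apply_eq x <;> simp [h]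

theorem isBoundedMeasurable_sign : IsBoundedMeasurable sign :=
  ⟨measurable_sign, 1, abs_sign_le_one⟩

theorem Aop_sign_of_lt {x : ℝ} (hx : 1 / 2 < x) : Aop sign x = 1 := by
  have hone : Aop sign x = Aop (fun _ => 1) x := by
    refine intervalIntegral.integral_congr fun y hy => sign_of_pos ?_
    rw [Set.uIcc_of_le (by linarith)] at hy
    linarith [hy.1]
  rw [hone, Aop_const]

/-! ### The Green function -/

/-- The kernel of the averaging operator, normalized to `1 / 2` at its two jumps so that it is
exactly half a difference of signs. -/
noncomputable def box (x : ℝ) : ℝ := 1 / 2 * (sign (x + 1 / 2) - sign (x + -(1 / 2)))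

theorem isBoundedMeasurable_box : IsBoundedMeasurable box :=
  ((isBoundedMeasurable_sign.comp_add_right _).sub
    (isBoundedMeasurable_sign.comp_add_right _)).const_mul _

theorem Aop_box : Aop box = fun x => 1 / 2 * (Aop sign (x + 1 / 2) - Aop sign (x - 1 / 2)) := by
  have hsign (s : ℝ) := (isBoundedMeasurable_sign.comp_add_right s).locallyIntegrable
  unfold box
  rw [Aop_const_mul, Aop_sub (hsign _) (hsign _), Aop_comp_add_right, Aop_comp_add_right]
  rfl

theorem Aop_box_of_lt {x : ℝ} (hx : 1 < x) : Aop box x = 0 := by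
  rw [Aop_box]
  simp only [Aop_sign_of_lt (show 1 / 2 < x + 1 / 2 by linarith),
    Aop_sign_of_lt (show 1 / 2 < x - 1 / 2 by linarith), sub_self, mul_zero]

theorem Aop_eq_box_convolution (G : ℝ → ℝ) : Aop G = fun x => ∫ y, box (x - y) * G y := by
  ext x
  rw [Aop, intervalIntegral.integral_of_le (by linarith), ← integral_indicator measurableSet_Ioc]
  refine integral_congr_ae ?_
  filter_upwards [Measure.ae_ne volume (x - 1 / 2), Measure.ae_ne volume (x + 1 / 2)]
    with y hleft hright
  rw [box]
  rcases lt_or_gt_of_ne hleft with hl | hl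
  · rw [Set.indicator_of_notMem fun hy => hl.not_gt hy.1, sign_of_pos (by linarith),
      sign_of_pos (by linarith)]
    ring
  rcases lt_or_gt_of_ne hright with hr | hr
  · rw [Set.indicator_of_mem (Set.mem_Ioc.2 ⟨hl, hr.le⟩), sign_of_pos (by linarith),
      sign_of_neg (by linarith)]
    ring
  · rw [Set.indicator_of_notMem fun hy => hr.not_ge hy.2, sign_of_neg (by linarith),
      sign_of_neg (by linarith)]
    ring

/-- `g` is a bounded Lipschitz solution of `Mop c g = A² δ₀` that tends to `0` at `+∞`; the right
hand side is written as `Aop box`, the convolution square of the kernel of `Aop`. -/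
structure IsGreenFunction (c : ℝ) (g : ℝ → ℝ) (B : ℝ) (L : ℝ≥0) : Prop where
  abs_apply_le : ∀ x, |g x| ≤ B
  lipschitz : LipschitzWith L g
  tendsto : Tendsto g atTop (𝓝 0)
  Mop_eq : Mop c g = Aop box

section Existence

variable {c kc μ C : ℝ} {R : ℝ → ℝ} {K : ℝ≥0}

theorem Mop_deriv_eq (hR : Differentiable ℝ R) (hR' : Continuous (deriv R))
    (hM : ∀ x, Mop c R x = Aop (Aop sign) x + μ) (x : ℝ) :
    Mop c (deriv R) x = Aop sign (x + 1 / 2) - Aop sign (x - 1 / 2) := by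
  have hleft := hasDerivAt_Mop (c := c) (fun y => (hR y).hasDerivAt) hR' x
  rw [funext hM] at hleft
  exact hleft.unique
    ((hasDerivAt_Aop (continuous_Aop isBoundedMeasurable_sign.locallyIntegrable) x).add_const μ)

/-- Differentiating the wave equation turns its right hand side `A² sgn` into `2 A² δ₀`, so half the
slope of a wave is a Green function once its oscillation at `+∞` is removed. -/
theorem HasSimpleRoots.exists_isGreenFunction (h : HasSimpleRoots c kc)
    (hR : Differentiable ℝ R) (hC : ∀ x, |deriv R x| ≤ C) (hK : LipschitzWith K (deriv R))
    (hM : ∀ x, Mop c R x = Aop (Aop sign) x + μ) :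
    ∃ g B L, IsGreenFunction c g B L := by
  set w : ℝ → ℝ := fun x => 1 / 2 * deriv R x
  have hMw : Mop c w = Aop box := by
    simp only [w, Mop_const_mul, Mop_deriv_eq hR hK.continuous hM, Aop_box]
  have hw : IsBoundedMeasurable w :=
    IsBoundedMeasurable.const_mul _ ⟨hK.continuous.measurable, C, hC⟩
  have hlip : LipschitzWith (‖(1 / 2 : ℝ)‖₊ * K) w := (lipschitzWith_smul (1 / 2 : ℝ)).comp hK
  obtain ⟨α, β, hlim⟩ := h.exists_tendsto_sub_of_Mop_eq_zero hw hlip (a := 1) fun x hx => by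
    rw [hMw, Aop_box_of_lt hx]
  obtain ⟨B, hB⟩ := hw.bounded
  refine ⟨_, B + (|α| + |β|), _, fun x =>
    (abs_sub _ _).trans (add_le_add (hB x) (abs_sinusoid_le kc α β x)),
    hlip.sub (lipschitzWith_sinusoid kc α β), hlim, ?_⟩
  rw [Mop_sub c hw.locallyIntegrable (continuous_sinusoid kc α β).locallyIntegrable, hMw]
  simp only [h.Mop_sinusoid, sub_zero]

end Existence

/-- A measurable source bounded by `b` and vanishing outside `[-r, r]`. -/
structure IsLocalizedSource (G : ℝ → ℝ) (r b : ℝ) : Prop where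
  measurable : Measurable G
  nonneg_radius : 0 ≤ r
  abs_apply_le : ∀ y, |G y| ≤ b
  eq_zero : ∀ y, r < |y| → G y = 0

namespace IsLocalizedSource

variable {G f : ℝ → ℝ} {r b M : ℝ}

theorem isBoundedMeasurable (hG : IsLocalizedSource G r b) : IsBoundedMeasurable G :=
  ⟨hG.measurable, b, hG.abs_apply_le⟩

theorem nonneg_bound (hG : IsLocalizedSource G r b) : 0 ≤ b :=
  (abs_nonneg _).trans (hG.abs_apply_le 0)

theorem eq_zero_of_notMem (hG : IsLocalizedSource G r b) {y : ℝ} (hy : y ∉ Set.Icc (-r) r) :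
    G y = 0 :=
  hG.eq_zero y (not_le.1 fun hle => hy (abs_le.1 hle))

theorem integrable (hG : IsLocalizedSource G r b) : Integrable G :=
  (Measure.integrableOn_of_bounded (s := Set.Icc (-r) r) (M := b) (by simp)
    hG.measurable.aestronglyMeasurable
    (Eventually.of_forall fun y => hG.abs_apply_le y)).integrable_of_forall_notMem_eq_zero
    fun _ hy => hG.eq_zero_of_notMem hy

theorem abs_integral_mul_le (hG : IsLocalizedSource G r b) (hf : ∀ y, |y| ≤ r → |f y| ≤ M) :
    |∫ y, f y * G y| ≤ 2 * r * M * b := by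
  have hr := hG.nonneg_radius
  have hM : 0 ≤ M := (abs_nonneg _).trans (hf 0 (by simpa using hr))
  rw [← setIntegral_eq_integral_of_forall_compl_eq_zero (s := Set.Icc (-r) r)
    fun y hy => mul_eq_zero_of_right _ (hG.eq_zero_of_notMem hy)]
  refine (norm_setIntegral_le_of_norm_le_const (μ := volume) (f := fun y => f y * G y) (C := M * b)
    measure_Icc_lt_top fun y hy => ?_).trans_eq ?_
  · rw [norm_mul]
    exact mul_le_mul (hf y (abs_le.2 hy)) (hG.abs_apply_le y) (norm_nonneg _) hM
  · rw [volume_real_Icc_of_le (by linarith)]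
    ring

end IsLocalizedSource

/-- The solution of `Mop c S = A² G + const` with `S 0 = 0` represented by the Green function
`g`. -/
noncomputable def greenSolution (g G : ℝ → ℝ) (x : ℝ) : ℝ := ∫ y, (g (x - y) - g (-y)) * G y

theorem greenSolution_zero (g G : ℝ → ℝ) : greenSolution g G 0 = 0 := by
  simp [greenSolution]

namespace IsGreenFunction

variable {c B r b : ℝ} {L : ℝ≥0} {g G G' : ℝ → ℝ}

theorem nonneg_bound (hg : IsGreenFunction c g B L) : 0 ≤ B :=
  (abs_nonneg _).trans (hg.abs_apply_le 0)

theorem integrable_mul (hg : IsGreenFunction c g B L) (hG : Integrable G) (x : ℝ) :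
    Integrable fun y => g (x - y) * G y := by
  have := hg.lipschitz.continuous
  exact hG.bdd_mul (c := B) (Continuous.aestronglyMeasurable (by fun_prop))
    (Eventually.of_forall fun y => hg.abs_apply_le _)

theorem continuous_convolution (hg : IsGreenFunction c g B L) (hG : Integrable G) :
    Continuous fun x => ∫ y, g (x - y) * G y := by
  have := hg.lipschitz.continuous
  refine continuous_of_dominated (bound := fun y => B * |G y|)
    (fun x => (hg.integrable_mul hG x).aestronglyMeasurable)
    (fun x => Eventually.of_forall fun y => ?_) (hG.abs.const_mul _)
    (Eventually.of_forall fun y => by fun_prop)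
  rw [norm_mul]
  exact mul_le_mul_of_nonneg_right (hg.abs_apply_le _) (norm_nonneg _)

theorem greenSolution_eq_sub (hg : IsGreenFunction c g B L) (hG : Integrable G) :
    greenSolution g G = fun x => (∫ y, g (x - y) * G y) - ∫ y, g (0 - y) * G y := by
  ext x
  rw [← integral_sub (hg.integrable_mul hG x) (hg.integrable_mul hG 0)]
  simp only [greenSolution, sub_mul, zero_sub]

theorem continuous_greenSolution (hg : IsGreenFunction c g B L) (hG : Integrable G) :
    Continuous (greenSolution g G) := by
  rw [hg.greenSolution_eq_sub hG]
  exact (hg.continuous_convolution hG).sub continuous_const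

theorem greenSolution_sub (hg : IsGreenFunction c g B L) (hG : Integrable G)
    (hG' : Integrable G') :
    greenSolution g (fun y => G y - G' y) =
      fun x => greenSolution g G x - greenSolution g G' x := by
  rw [hg.greenSolution_eq_sub (G := fun y => G y - G' y) (hG.sub hG'), hg.greenSolution_eq_sub hG,
    hg.greenSolution_eq_sub hG']
  ext x
  simp only [mul_sub, integral_sub (hg.integrable_mul hG _) (hg.integrable_mul hG' _)]
  ring

theorem abs_greenSolution_sub_le (hg : IsGreenFunction c g B L)
    (hG : IsLocalizedSource G r b) (x x' : ℝ) :
    |greenSolution g G x - greenSolution g G x'| ≤ 2 * r * L * b * |x - x'| := by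
  rw [hg.greenSolution_eq_sub hG.integrable, sub_sub_sub_cancel_right,
    ← integral_sub (hg.integrable_mul hG.integrable x) (hg.integrable_mul hG.integrable x')]
  simp only [← sub_mul]
  refine (hG.abs_integral_mul_le (M := L * |x - x'|) fun y _ => ?_).trans_eq (by ring)
  simpa using abs_sub_le_of_lipschitzWith hg.lipschitz (x - y) (x' - y)

theorem abs_integral_mul_sub_le (hg : IsGreenFunction c g B L) (hG : IsLocalizedSource G r b)
    (x : ℝ) : |(∫ y, g (x - y) * G y) - g x * ∫ y, G y| ≤ 2 * r * (L * r) * b := by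
  rw [← integral_const_mul, ← integral_sub (hg.integrable_mul hG.integrable x)
    (hG.integrable.const_mul _)]
  simp only [← sub_mul]
  refine hG.abs_integral_mul_le fun y hy =>
    (abs_sub_le_of_lipschitzWith hg.lipschitz (x - y) x).trans ?_
  rw [sub_sub_cancel_left, abs_neg]
  gcongr

theorem abs_greenSolution_le (hg : IsGreenFunction c g B L) (hG : IsLocalizedSource G r b)
    (x : ℝ) : |greenSolution g G x| ≤ 4 * L * r ^ 2 * b + 2 * B * |∫ y, G y| := by
  have hsplit : greenSolution g G x
      = ((∫ y, g (x - y) * G y) - g x * ∫ y, G y) - ((∫ y, g (0 - y) * G y) - g 0 * ∫ y, G y)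
        + (g x - g 0) * ∫ y, G y := by
    rw [hg.greenSolution_eq_sub hG.integrable]
    ring
  have hmass : |(g x - g 0) * ∫ y, G y| ≤ 2 * B * |∫ y, G y| := by
    rw [abs_mul]
    gcongr
    linarith [abs_sub (g x) (g 0), hg.abs_apply_le x, hg.abs_apply_le 0]
  rw [hsplit]
  refine (abs_add_le _ _).trans (add_le_add ((abs_sub _ _).trans ?_) hmass)
  linarith [hg.abs_integral_mul_sub_le hG x, hg.abs_integral_mul_sub_le hG 0]

theorem exists_tendsto_greenSolution (hg : IsGreenFunction c g B L) (hG : Integrable G) :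
    ∃ l, Tendsto (greenSolution g G) atTop (𝓝 l) := by
  have hlim : Tendsto (fun x => ∫ y, g (x - y) * G y) atTop (𝓝 (∫ y, 0 * G y)) := by
    refine tendsto_integral_filter_of_dominated_convergence (fun y => B * |G y|)
      (Eventually.of_forall fun x => (hg.integrable_mul hG x).aestronglyMeasurable)
      (Eventually.of_forall fun x => Eventually.of_forall fun y => ?_) (hG.abs.const_mul _)
      (Eventually.of_forall fun y => ?_)
    · rw [norm_mul]
      exact mul_le_mul_of_nonneg_right (hg.abs_apply_le _) (norm_nonneg _)
    · exact (hg.tendsto.comp (tendsto_atTop_add_const_right _ (-y) tendsto_id)).mul_const _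
  rw [hg.greenSolution_eq_sub hG]
  exact ⟨_, hlim.sub_const _⟩

theorem Mop_greenSolution (hg : IsGreenFunction c g B L) (hG : Integrable G) :
    ∃ η, ∀ x, Mop c (greenSolution g G) x = Aop (Aop G) x + η := by
  have hconv : Mop c (fun x => ∫ y, g (x - y) * G y) = Aop (Aop G) := by
    rw [Mop_convolution hg.lipschitz.continuous.measurable hg.abs_apply_le hG, hg.Mop_eq]
    obtain ⟨b, hb⟩ := isBoundedMeasurable_box.bounded
    rw [Aop_eq_box_convolution G, Aop_convolution isBoundedMeasurable_box.measurable hb hG]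
  refine ⟨-((1 - c ^ 2) * ∫ y, g (0 - y) * G y), fun x => ?_⟩
  rw [hg.greenSolution_eq_sub hG, Mop_sub c (hg.continuous_convolution hG).locallyIntegrable
    continuous_const.locallyIntegrable, hconv, Mop_const]
  ring

end IsGreenFunction

section Regularity

variable {c η : ℝ} {S G : ℝ → ℝ}

theorem hasDerivAt_of_Mop_eq (hc : c ≠ 0) (hS : LocallyIntegrable S) (hG : LocallyIntegrable G)
    (hM : ∀ x, Mop c S x = Aop (Aop G) x + η) (x : ℝ) :
    HasDerivAt S ((Aop (fun y => S y - G y) (x + 1 / 2)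
      - Aop (fun y => S y - G y) (x - 1 / 2)) / c ^ 2) x := by
  have hrep : S = fun x => (Aop (Aop fun y => S y - G y) x - η) / c ^ 2 := by
    ext x
    have := hM x
    rw [Mop] at this
    rw [Aop_Aop_sub hS hG]
    field_simp
    linarith
  have hderiv := ((hasDerivAt_Aop (continuous_Aop (hS.sub hG)) x).sub_const η).div_const (c ^ 2)
  exact hderiv.congr_of_eventuallyEq (Eventually.of_forall (congrFun hrep))

theorem lipschitzWith_deriv_of_Mop_eq {b : ℝ≥0} (hc : c ≠ 0) (hS : IsBoundedMeasurable S)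
    (hG : IsBoundedMeasurable G) (hb : ∀ x, |S x - G x| ≤ b)
    (hM : ∀ x, Mop c S x = Aop (Aop G) x + η) : LipschitzWith (4 * b / ‖c ^ 2‖₊) (deriv S) := by
  refine LipschitzWith.of_dist_le_mul fun x y => ?_
  have hlip := lipschitzWith_Aop (hS.sub hG).locallyIntegrable hb
  have hderiv := hasDerivAt_of_Mop_eq hc hS.locallyIntegrable hG.locallyIntegrable hM
  have hright := abs_sub_le_of_lipschitzWith hlip (x + 1 / 2) (y + 1 / 2)
  have hleft := abs_sub_le_of_lipschitzWith hlip (x - 1 / 2) (y - 1 / 2)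
  rw [add_sub_add_right_eq_sub] at hright
  rw [sub_sub_sub_cancel_right] at hleft
  rw [(hderiv x).deriv, (hderiv y).deriv, dist_eq, dist_eq, ← sub_div, abs_div,
    sub_sub_sub_comm]
  push_cast at hright hleft ⊢
  rw [norm_eq_abs, div_mul_eq_mul_div]
  gcongr
  linarith [abs_sub (Aop (fun y => S y - G y) (x + 1 / 2) - Aop (fun y => S y - G y) (y + 1 / 2))
    (Aop (fun y => S y - G y) (x - 1 / 2) - Aop (fun y => S y - G y) (y - 1 / 2))]

end Regularity

/-! ### The corrector equation -/

/-- A Lipschitz approximation `p` of the sign function that agrees with it outside `(-δ, δ)` and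
has the same integral; the derivatives `Ψ_δ'` of Assumption A with `I_δ = 0` are of this kind. -/
structure SignApprox (p : ℝ → ℝ) (δ C : ℝ) : Prop where
  pos : 0 < δ
  eq_sign : ∀ r, δ ≤ |r| → p r = Real.sign r
  abs_apply_le : ∀ r, |p r| ≤ C
  abs_sub_le : ∀ r s, |p r - p s| ≤ C / δ * |r - s|
  integral_sub_sign : ∫ r, (p r - Real.sign r) = 0

/-- The source term `p ∘ F - sign` of the corrector equation, for a profile `F` with the signs of
its argument. -/
noncomputable def signDefect (p F : ℝ → ℝ) (x : ℝ) : ℝ := p (F x) - Real.sign x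

theorem SteepZero.const_mul_id {r d s : ℝ} (hr : 0 < r) (hd : 0 < d) (hs : d < s) :
    SteepZero (fun x => s * x) (r / d) r d where
  differentiable := differentiable_id.const_mul s
  map_zero := mul_zero s
  pos_width := div_pos hr hd
  pos_gap := hr
  pos_slope := hd
  lt_right x hx := by
    have hx' := (div_lt_iff₀ hd).1 hx
    nlinarith [(div_pos hr hd).trans hx]
  lt_left x hx := by
    have hx' := (div_lt_iff₀ hd).1 (lt_neg.1 hx)
    nlinarith [(div_pos hr hd).trans (lt_neg.1 hx)]
  lt_deriv x _ := by simpa [deriv_const_mul_field] using hs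

theorem AssumptionA.signApprox {Ψ : ℝ → ℝ → ℝ} {C δ : ℝ} (hΨ : AssumptionA Ψ C) (hδ : 0 < δ)
    (hI : Idelta Ψ δ = 0) : SignApprox (deriv (Ψ δ)) δ C := by
  obtain ⟨-, hsmooth, hsign, hbound, hbound'⟩ := hΨ.2 δ hδ
  have hdiff : Differentiable ℝ (deriv (Ψ δ)) :=
    ((contDiff_succ_iff_deriv (n := 1)).1 hsmooth).2.2.differentiable one_ne_zero
  refine ⟨hδ, hsign, hbound, fun r s => ?_, ?_⟩
  · exact convex_univ.norm_image_sub_le_of_norm_deriv_le (fun z _ => hdiff z)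
      (fun z _ => hbound' z) (Set.mem_univ s) (Set.mem_univ r)
  · rw [Idelta] at hI
    linarith

namespace SignApprox

variable {p F F' : ℝ → ℝ} {C D δ x₀ x₀' r r' d s ε : ℝ}

theorem nonneg_bound (hp : SignApprox p δ C) : 0 ≤ C := (abs_nonneg _).trans (hp.abs_apply_le 0)

theorem continuous (hp : SignApprox p δ C) : Continuous p :=
  (LipschitzWith.of_dist_le_mul (K := ⟨C / δ, div_nonneg hp.nonneg_bound hp.pos.le⟩)
    fun r s => hp.abs_sub_le r s).continuous

theorem isLocalizedSource (hp : SignApprox p δ C) (hF : SteepZero F x₀ r d) (hδ : δ ≤ r) :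
    IsLocalizedSource (signDefect p F) (δ / d) (C + 1) where
  measurable := (hp.continuous.comp hF.differentiable.continuous).measurable.sub measurable_sign
  nonneg_radius := div_nonneg hp.pos.le hF.pos_slope.le
  abs_apply_le x := (abs_sub _ _).trans (add_le_add (hp.abs_apply_le _) (abs_sign_le_one _))
  eq_zero x hx := by
    rw [signDefect, hp.eq_sign _ (hF.le_abs_of_le_abs hδ hx.le), hF.sign_apply, sub_self]

theorem isLocalizedSource_sub (hp : SignApprox p δ C) (hF : SteepZero F x₀ r d) (hδ : δ ≤ r)
    (hF' : SteepZero F' x₀' r' d) (hδ' : δ ≤ r')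
    (hD : ∀ x, |x| ≤ δ / d → |F x - F' x| ≤ D * |x|) :
    IsLocalizedSource (fun x => signDefect p F x - signDefect p F' x) (δ / d) (C * D / d) := by
  have hsrc := hp.isLocalizedSource hF hδ
  have hsrc' := hp.isLocalizedSource hF' hδ'
  have hC := hp.nonneg_bound
  have hδ0 := hp.pos
  have hd := hF.pos_slope
  have hw : 0 < δ / d := div_pos hδ0 hd
  have hD0 : 0 ≤ D := nonneg_of_mul_nonneg_left
    ((abs_nonneg _).trans (hD (δ / d) (abs_of_pos hw).le)) (abs_pos.2 hw.ne')
  refine ⟨hsrc.measurable.sub hsrc'.measurable, hw.le, fun x => ?_, fun x hx => by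
    rw [hsrc.eq_zero x hx, hsrc'.eq_zero x hx, sub_zero]⟩
  rcases le_or_gt |x| (δ / d) with hx | hx
  · calc |signDefect p F x - signDefect p F' x| = |p (F x) - p (F' x)| := by
          rw [signDefect, signDefect, sub_sub_sub_cancel_right]
      _ ≤ C / δ * |F x - F' x| := hp.abs_sub_le _ _
      _ ≤ C / δ * (D * (δ / d)) := by
          gcongr
          exact (hD x hx).trans (mul_le_mul_of_nonneg_left hx hD0)
      _ = C * D / d := by field_simp
  · rw [hsrc.eq_zero x hx, hsrc'.eq_zero x hx, sub_zero, abs_zero]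
    positivity

theorem integral_signDefect_const_mul_id (hp : SignApprox p δ C) (hs : 0 < s) :
    ∫ x, signDefect p (fun x => s * x) x = 0 := by
  have hscale := Measure.integral_comp_mul_left (fun r => p r - Real.sign r) s
  rw [hp.integral_sub_sign, smul_zero] at hscale
  rw [← hscale]
  have hline := SteepZero.const_mul_id one_pos (half_pos hs) (half_lt_self hs)
  simp only [signDefect, hline.sign_apply]

/-- The vanishing mean of `p - sign` gains one power of `δ` over the trivial bound, since `F` is
nearly linear on the support. -/
theorem abs_integral_signDefect_le (hp : SignApprox p δ C) (hF : SteepZero F x₀ r d) (hδ : δ ≤ r)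
    (hs : d < s) (hlin : ∀ x, |x| ≤ δ / d → |F x - s * x| ≤ ε * |x|) :
    |∫ x, signDefect p F x| ≤ 2 * (δ / d) * (C * ε / d) := by
  have hline := SteepZero.const_mul_id hF.pos_gap hF.pos_slope hs
  have hsub := (hp.isLocalizedSource_sub hF hδ hline hδ hlin).abs_integral_mul_le
    (f := 1) (M := 1) fun _ _ => by simp
  simp only [Pi.one_apply, one_mul, mul_one] at hsub
  rwa [integral_sub (hp.isLocalizedSource hF hδ).integrable
    (hp.isLocalizedSource hline hδ).integrable,
    hp.integral_signDefect_const_mul_id (hF.pos_slope.trans hs), sub_zero] at hsub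

end SignApprox

/-- Differentiable functions vanishing at `0` with `|S| ≤ a` and `|S'| ≤ b`. -/
structure C1Ball (a b : ℝ) (S : ℝ → ℝ) : Prop where
  differentiable : Differentiable ℝ S
  map_zero : S 0 = 0
  abs_apply_le : ∀ x, |S x| ≤ a
  abs_deriv_le : ∀ x, |deriv S x| ≤ b

namespace C1Ball

open BoundedContinuousFunction

variable {a b D : ℝ} {S S' V : ℝ → ℝ} {q : ℝ≥0} {T : (ℝ → ℝ) → ℝ → ℝ}

theorem primitive_iff (hV : Continuous V) : C1Ball a b (fun x => ∫ t in (0 : ℝ)..x, V t) ↔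
    (∀ x, |V x| ≤ b) ∧ ∀ x, |∫ t in (0 : ℝ)..x, V t| ≤ a := by
  have hderiv x := (hasDerivAt_primitive hV x).deriv
  exact ⟨fun h => ⟨fun x => hderiv x ▸ h.abs_deriv_le x, h.abs_apply_le⟩, fun h =>
    ⟨fun x => (hasDerivAt_primitive hV x).differentiableAt, intervalIntegral.integral_same, h.2,
      fun x => (hderiv x).symm ▸ h.1 x⟩⟩

theorem primitive_deriv (hS : C1Ball a b S) (hc : Continuous (deriv S)) :
    (fun x => ∫ t in (0 : ℝ)..x, deriv S t) = S := by
  ext x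
  rw [intervalIntegral.integral_eq_sub_of_hasDerivAt (fun y _ => (hS.differentiable y).hasDerivAt)
    (hc.intervalIntegrable _ _), hS.map_zero, sub_zero]

theorem abs_sub_le (hS : C1Ball a b S) (hS' : C1Ball a b S')
    (hD : ∀ x, |deriv S x - deriv S' x| ≤ D) (x : ℝ) : |S x - S' x| ≤ D * |x| := by
  have hmvt := convex_univ.norm_image_sub_le_of_norm_hasDerivWithin_le (f := fun x => S x - S' x)
    (fun z _ => ((hS.differentiable z).hasDerivAt.sub
      (hS'.differentiable z).hasDerivAt).hasDerivWithinAt)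
    (fun z _ => hD z) (Set.mem_univ 0) (Set.mem_univ x)
  simpa [hS.map_zero, hS'.map_zero] using hmvt

theorem continuous_integral_apply (x : ℝ) :
    Continuous fun V : ℝ →ᵇ ℝ => ∫ t in (0 : ℝ)..x, V t := by
  refine (LipschitzWith.of_dist_le_mul (K := Real.nnabs x) fun V W => ?_).continuous
  rw [Real.dist_eq, ← intervalIntegral.integral_sub (V.continuous.intervalIntegrable _ _)
    (W.continuous.intervalIntegrable _ _), Real.coe_nnabs, mul_comm]
  have hle := intervalIntegral.norm_integral_le_of_norm_le_const (a := 0) (b := x)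
    (f := fun t => V t - W t) fun t _ => dist_coe_le_dist (f := V) (g := W) t
  rwa [sub_zero] at hle

theorem isClosed_setOf_primitive :
    IsClosed {V : ℝ →ᵇ ℝ | C1Ball a b fun x => ∫ t in (0 : ℝ)..x, V t} := by
  simp only [primitive_iff (ContinuousMapClass.map_continuous _), Set.ofPred_and, Set.ofPred_forall]
  exact (isClosed_iInter fun x => isClosed_le (continuous_eval_const x).abs continuous_const).inter
    (isClosed_iInter fun x => isClosed_le (continuous_integral_apply x).abs continuous_const)

/-- Only the derivatives are required to contract, so the iteration takes place in the complete
space of bounded continuous derivatives. -/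
theorem exists_fixedPoint (ha : 0 ≤ a) (hb : 0 ≤ b) (hq : q < 1)
    (hmaps : ∀ S, C1Ball a b S → C1Ball a b (T S))
    (hcont : ∀ S, C1Ball a b S → Continuous (deriv (T S)))
    (hcontr : ∀ S S' D, C1Ball a b S → C1Ball a b S' → (∀ x, |deriv S x - deriv S' x| ≤ D) →
      ∀ x, |deriv (T S) x - deriv (T S') x| ≤ q * D) :
    ∃ S, C1Ball a b S ∧ T S = S := by
  let Z := {V : ℝ →ᵇ ℝ | C1Ball a b fun x => ∫ t in (0 : ℝ)..x, V t}
  let P (V : Z) (x : ℝ) : ℝ := ∫ t in (0 : ℝ)..x, V.1 t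
  have hP (V : Z) : C1Ball a b (P V) := V.2
  have hderiv (V : Z) (x : ℝ) : deriv (P V) x = V.1 x :=
    (hasDerivAt_primitive V.1.continuous x).deriv
  have hprim (V : Z) : (fun x => ∫ t in (0 : ℝ)..x, deriv (T (P V)) t) = T (P V) :=
    (hmaps _ (hP V)).primitive_deriv (hcont _ (hP V))
  let Φ (V : Z) : Z := ⟨.ofNormedAddCommGroup (deriv (T (P V))) (hcont _ (hP V)) b
    (hmaps _ (hP V)).abs_deriv_le, (congrArg (C1Ball a b) (hprim V)).mpr (hmaps _ (hP V))⟩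
  have hΦ : ContractingWith q Φ := by
    refine ⟨hq, LipschitzWith.of_dist_le_mul fun V W => ?_⟩
    rw [Subtype.dist_eq, BoundedContinuousFunction.dist_le (by positivity)]
    refine hcontr _ _ _ (hP V) (hP W) fun x => ?_
    rw [hderiv, hderiv]
    exact dist_coe_le_dist (f := V.1) (g := W.1) x
  have : CompleteSpace Z := isClosed_setOf_primitive.completeSpace_coe
  have : Nonempty Z := ⟨0, (primitive_iff continuous_zero).2 ⟨by simpa, by simpa⟩⟩
  obtain ⟨V, hV⟩ : ∃ V, Φ V = V := ⟨_, hΦ.fixedPoint_isFixedPt⟩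
  refine ⟨P V, hP V, ?_⟩
  rw [← hprim V]
  exact congrArg P hV

theorem fixedPoint_unique (hq : q < 1)
    (hcontr : ∀ S S' D, C1Ball a b S → C1Ball a b S' → (∀ x, |deriv S x - deriv S' x| ≤ D) →
      ∀ x, |deriv (T S) x - deriv (T S') x| ≤ q * D)
    (hS : C1Ball a b S) (hS' : C1Ball a b S') (hfix : T S = S) (hfix' : T S' = S') : S = S' := by
  have hle : ∀ x, |deriv S x - deriv S' x| ≤ ⨆ x, |deriv S x - deriv S' x| :=
    le_ciSup ⟨b + b, Set.forall_mem_range.2 fun x =>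
      (abs_sub _ _).trans (add_le_add (hS.abs_deriv_le x) (hS'.abs_deriv_le x))⟩
  have hsup : ⨆ x, |deriv S x - deriv S' x| ≤ q * ⨆ x, |deriv S x - deriv S' x| :=
    ciSup_le fun x => by simpa only [hfix, hfix'] using hcontr S S' _ hS hS' hle x
  have hzero : ⨆ x, |deriv S x - deriv S' x| ≤ 0 :=
    nonpos_of_mul_nonneg_right (a := (q : ℝ) - 1) (by linarith) (sub_neg.2 hq)
  ext x
  have hx := hS.abs_sub_le hS' (fun x => (hle x).trans hzero) x
  rw [zero_mul] at hx
  exact sub_eq_zero.1 (abs_nonpos_iff.1 hx)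

end C1Ball

namespace IsGreenFunction

variable {c B r b b' a D : ℝ} {L M : ℝ≥0} {g G G' : ℝ → ℝ}

theorem isBoundedMeasurable_greenSolution (hg : IsGreenFunction c g B L)
    (hG : IsLocalizedSource G r b) : IsBoundedMeasurable (greenSolution g G) :=
  ⟨(hg.continuous_greenSolution hG.integrable).measurable, _, hg.abs_greenSolution_le hG⟩

theorem differentiable_greenSolution (hc : c ≠ 0) (hg : IsGreenFunction c g B L)
    (hG : IsLocalizedSource G r b) : Differentiable ℝ (greenSolution g G) := by
  obtain ⟨η, hM⟩ := hg.Mop_greenSolution hG.integrable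
  have hS := (hg.isBoundedMeasurable_greenSolution hG).locallyIntegrable
  exact fun x =>
    (hasDerivAt_of_Mop_eq hc hS hG.isBoundedMeasurable.locallyIntegrable hM x).differentiableAt

theorem lipschitzWith_deriv_greenSolution (hc : c ≠ 0) (hg : IsGreenFunction c g B L)
    (hG : IsLocalizedSource G r b) (hM : ∀ x, |greenSolution g G x - G x| ≤ M) :
    LipschitzWith (4 * M / ‖c ^ 2‖₊) (deriv (greenSolution g G)) := by
  obtain ⟨η, hη⟩ := hg.Mop_greenSolution hG.integrable
  exact lipschitzWith_deriv_of_Mop_eq hc (hg.isBoundedMeasurable_greenSolution hG)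
    hG.isBoundedMeasurable hM hη

theorem continuous_deriv_greenSolution (hc : c ≠ 0) (hg : IsGreenFunction c g B L)
    (hG : IsLocalizedSource G r b) : Continuous (deriv (greenSolution g G)) := by
  obtain ⟨M, hM⟩ := ((hg.isBoundedMeasurable_greenSolution hG).sub hG.isBoundedMeasurable).bounded
  exact (hg.lipschitzWith_deriv_greenSolution hc hG
    fun x => (hM x).trans (Real.le_coe_toNNReal M)).continuous

theorem abs_deriv_greenSolution_le (hg : IsGreenFunction c g B L) (hG : IsLocalizedSource G r b)
    (x : ℝ) : |deriv (greenSolution g G) x| ≤ 2 * r * L * b := by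
  have hr := hG.nonneg_radius
  have hb := hG.nonneg_bound
  exact norm_deriv_le_of_lip' (f := greenSolution g G) (C := 2 * r * L * b) (by positivity)
    (Eventually.of_forall fun y => hg.abs_greenSolution_sub_le hG y x)

theorem abs_deriv_greenSolution_sub_le (hc : c ≠ 0) (hg : IsGreenFunction c g B L)
    (hG : IsLocalizedSource G r b) (hG' : IsLocalizedSource G' r b')
    (hsub : IsLocalizedSource (fun y => G y - G' y) r D) (x : ℝ) :
    |deriv (greenSolution g G) x - deriv (greenSolution g G') x| ≤ 2 * r * L * D := by
  rw [← deriv_fun_sub (hg.differentiable_greenSolution hc hG x)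
    (hg.differentiable_greenSolution hc hG' x),
    ← hg.greenSolution_sub hG.integrable hG'.integrable]
  exact hg.abs_deriv_greenSolution_le hsub x

theorem c1Ball_greenSolution (hc : c ≠ 0) (hg : IsGreenFunction c g B L)
    (hG : IsLocalizedSource G r b) (ha : 4 * L * r ^ 2 * b + 2 * B * |∫ y, G y| ≤ a)
    (hb' : 2 * r * L * b ≤ b') : C1Ball a b' (greenSolution g G) :=
  ⟨hg.differentiable_greenSolution hc hG, greenSolution_zero g G,
    fun x => (hg.abs_greenSolution_le hG x).trans ha,
    fun x => (hg.abs_deriv_greenSolution_le hG x).trans hb'⟩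

end IsGreenFunction

namespace C1Ball

variable {a b c kc r d x₀ w l l' η η' : ℝ} {K : ℝ≥0} {R S S' f : ℝ → ℝ}

theorem isBoundedMeasurable (hS : C1Ball a b S) : IsBoundedMeasurable S :=
  ⟨hS.differentiable.continuous.measurable, a, hS.abs_apply_le⟩

theorem lipschitzWith (hS : C1Ball a b S) : LipschitzWith b.toNNReal S :=
  lipschitzWith_of_nnnorm_deriv_le hS.differentiable fun x =>
    NNReal.coe_le_coe.1 ((hS.abs_deriv_le x).trans (Real.le_coe_toNNReal b))

theorem eq_of_Mop_eq (h : HasSimpleRoots c kc) (hS : C1Ball a b S) (hS' : C1Ball a b S')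
    (hl : Tendsto S atTop (𝓝 l)) (hl' : Tendsto S' atTop (𝓝 l'))
    (hM : ∀ x, Mop c S x = f x + η) (hM' : ∀ x, Mop c S' x = f x + η') : S = S' := by
  have hdiff x : Mop c (fun y => S y - S' y) x = η - η' := by
    rw [Mop_sub c hS.isBoundedMeasurable.locallyIntegrable
      hS'.isBoundedMeasurable.locallyIntegrable]
    dsimp only
    rw [hM, hM', add_sub_add_left_eq_sub]
  ext x
  exact sub_eq_zero.1 (eq_zero_of_Mop_eq_const h
    (hS.isBoundedMeasurable.sub hS'.isBoundedMeasurable) (hS.lipschitzWith.sub hS'.lipschitzWith)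
    hdiff (hl.sub hl') (by rw [hS.map_zero, hS'.map_zero, sub_zero]) x)

theorem steepZero_add (hS : C1Ball a b S) (hR : SteepZero R x₀ (2 * r) (2 * d)) (ha : a ≤ r)
    (hb : b ≤ d) : SteepZero (fun x => R x + S x) x₀ r d := by
  have hadd := hR.add hS.differentiable hS.map_zero
    (fun x => by linarith [hS.abs_apply_le x]) (fun x => by linarith [hS.abs_deriv_le x])
  rwa [mul_div_cancel_left₀ _ two_ne_zero, mul_div_cancel_left₀ _ two_ne_zero] at hadd

theorem abs_deriv_add_sub_le (hS : C1Ball a b S) (hK : LipschitzWith K (deriv R)) {x : ℝ}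
    (hx : |x| ≤ w) : |deriv R x + deriv S x - deriv R 0| ≤ K * w + b := by
  rw [add_sub_right_comm]
  refine (abs_add_le _ _).trans (add_le_add ((abs_sub_le_of_lipschitzWith hK x 0).trans ?_)
    (hS.abs_deriv_le x))
  rw [sub_zero]
  gcongr

theorem abs_add_sub_deriv_mul_le (hS : C1Ball a b S) (hR : Differentiable ℝ R) (hR0 : R 0 = 0)
    (hK : LipschitzWith K (deriv R)) {x : ℝ} (hx : |x| ≤ w) :
    |R x + S x - deriv R 0 * x| ≤ (K * w + b) * |x| := by
  have hderiv z : HasDerivAt (fun x => R x + S x - deriv R 0 * x)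
      (deriv R z + deriv S z - deriv R 0) z :=
    ((hR z).hasDerivAt.add (hS.differentiable z).hasDerivAt).sub (hasDerivAt_const_mul _)
  have hw : 0 ≤ w := (abs_nonneg x).trans hx
  have hmvt := (convex_Icc (-w) w).norm_image_sub_le_of_norm_hasDerivWithin_le
    (fun z _ => (hderiv z).hasDerivWithinAt)
    (fun z hz => hS.abs_deriv_add_sub_le hK (abs_le.2 hz)) ⟨by linarith, hw⟩ (abs_le.1 hx)
  simpa [hR0, hS.map_zero] using hmvt

theorem isW2inf (hS : C1Ball a b S) (hK : LipschitzWith K (deriv S)) : IsW2inf S :=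
  ⟨hS.differentiable, ⟨max a b, fun x => ⟨le_max_of_le_left (hS.abs_apply_le x),
    le_max_of_le_right (hS.abs_deriv_le x)⟩⟩, K, hK⟩

theorem admissible {δ : ℝ} (hS : C1Ball a b S) (hS' : IsW2inf S)
    (hR : SteepZero R x₀ (2 * r) (2 * d)) (hK : LipschitzWith K (deriv R)) (hδ : 0 < δ)
    (hδr : δ < r) (ha : a ≤ r) (hslope : K * (δ / d) + b ≤ d) : Admissible δ R S := by
  have hd : 0 < d := by linarith [hR.pos_slope]
  have hb : b ≤ d := le_of_add_le_of_nonneg_right hslope (by positivity)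
  have hF := hS.steepZero_add hR ha hb
  obtain ⟨xp, hxp, hxp_le, hFxp, hgt⟩ := hF.exists_crossing hδ hδr
  obtain ⟨xm, hxm, hxm_le, hFxm, hlt⟩ := hF.neg_comp_neg.exists_crossing hδ hδr
  refine ⟨hS', hS.map_zero, -xm, xp, neg_lt_zero.2 hxm, hxp, neg_eq_iff_eq_neg.1 hFxm, hFxp,
    fun x hx => ?_, hgt, fun x hx hx' => ?_⟩
  · have hx' := hlt (-x) (lt_neg.1 hx)
    rw [neg_neg] at hx'
    exact lt_neg.1 hx'
  · have hclose := abs_le.1 (hS.abs_deriv_add_sub_le hK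
      (abs_le.2 ⟨by linarith, by linarith⟩ : |x| ≤ δ / d))
    have hslope0 := hR.lt_deriv 0 (by simpa using hR.pos_width)
    constructor <;> linarith

end C1Ball

/-- Smallness of `δ` relative to the radii `a`, `b` of the ball `C1Ball a b` under which the
corrector map is a contraction of that ball. The Green function is bounded by `B` and
`L`-Lipschitz, `C` and `K` control `Ψ_δ'` and `R₀''`, and the wave has gap `2r` and slope `2d`. -/
structure SmallScale (B L C K r d δ a b : ℝ) : Prop where
  lt_gap : δ < r
  le_gap : a ≤ r
  slope_le : K * (δ / d) + b ≤ d
  le_radius : 4 * L * (δ / d) ^ 2 * (C + 1)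
    + 2 * B * (2 * (δ / d) * (C * (K * (δ / d) + b) / d)) ≤ a
  le_radius_deriv : 2 * (δ / d) * L * (C + 1) ≤ b
  contraction : 2 * (δ / d) * L * (C / d) ≤ 1 / 2

theorem exists_smallScale {B L C K r d : ℝ} (hB : 0 ≤ B) (hL : 0 ≤ L) (hC : 0 ≤ C) (hK : 0 ≤ K)
    (hr : 0 < r) (hd : 0 < d) :
    ∃ C₀ C₁, 0 < C₀ ∧ 0 < C₁ ∧ ∀ᶠ δ in 𝓝[>] 0,
      C₀ * δ ^ 2 ≤ 1 ∧ SmallScale B L C K r d δ (C₀ * δ ^ 2) (C₁ * δ) := by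
  set C₁ := 2 * L * (C + 1) / d + 1 with hC₁
  set C₀ := 4 * L * (C + 1) / d ^ 2 + 4 * B * C * (K / d + C₁) / d ^ 2 + 1 with hC₀
  have hsmall {f : ℝ → ℝ} {e : ℝ} (hf : Continuous f) (hf0 : f 0 = 0) (he : 0 < e) :
      ∀ᶠ δ in 𝓝[>] 0, f δ < e :=
    nhdsWithin_le_nhds ((hf.tendsto' 0 0 hf0).eventually_lt_const he)
  refine ⟨C₀, C₁, by positivity, by positivity, ?_⟩
  filter_upwards [self_mem_nhdsWithin, hsmall continuous_id rfl hr,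
    hsmall (f := fun δ => C₀ * δ ^ 2) (by fun_prop) (by simp) one_pos,
    hsmall (f := fun δ => C₀ * δ ^ 2) (by fun_prop) (by simp) hr,
    hsmall (f := fun δ => K * (δ / d) + C₁ * δ) (by fun_prop) (by simp) hd,
    hsmall (f := fun δ => 2 * (δ / d) * L * (C / d)) (by fun_prop) (by simp) one_half_pos]
    with δ hδ hδr hone hgap hslope hcontr
  have hδ0 : 0 < δ := hδ
  refine ⟨hone.le, hδr, hgap.le, hslope.le, ?_, ?_, hcontr.le⟩
  · calc 4 * L * (δ / d) ^ 2 * (C + 1) + 2 * B * (2 * (δ / d) * (C * (K * (δ / d) + C₁ * δ) / d))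
        = (C₀ - 1) * δ ^ 2 := by rw [hC₀]; field_simp; ring
      _ ≤ C₀ * δ ^ 2 := by nlinarith
  · calc 2 * (δ / d) * L * (C + 1) = (C₁ - 1) * δ := by rw [hC₁]; field_simp; ring
      _ ≤ C₁ * δ := by nlinarith

/-- The map whose fixed points are the correctors: it solves `M T = A² G(S) + const`, `T 0 = 0`,
for the source `G(S) = p ∘ (R + S) - sign` with `p = Ψ_δ'`. -/
noncomputable def correctorMap (g p R S : ℝ → ℝ) : ℝ → ℝ :=
  greenSolution g (signDefect p fun x => R x + S x)

namespace SmallScale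

variable {c kc B C r d δ a b x₀ l l' η η' : ℝ} {L K : ℝ≥0} {g p R S S' : ℝ → ℝ}

theorem steepZero_add (hs : SmallScale B L C K r d δ a b) (hp : SignApprox p δ C)
    (hR : SteepZero R x₀ (2 * r) (2 * d)) (hS : C1Ball a b S) :
    SteepZero (fun x => R x + S x) x₀ r d := by
  have hd : 0 < d := by linarith [hR.pos_slope]
  have hδ := hp.pos
  exact hS.steepZero_add hR hs.le_gap (le_of_add_le_of_nonneg_right hs.slope_le (by positivity))

theorem isLocalizedSource (hs : SmallScale B L C K r d δ a b) (hp : SignApprox p δ C)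
    (hR : SteepZero R x₀ (2 * r) (2 * d)) (hS : C1Ball a b S) :
    IsLocalizedSource (signDefect p fun x => R x + S x) (δ / d) (C + 1) :=
  hp.isLocalizedSource (hs.steepZero_add hp hR hS) hs.lt_gap.le

theorem c1Ball_correctorMap (hs : SmallScale B L C K r d δ a b) (hc : c ≠ 0)
    (hg : IsGreenFunction c g B L) (hp : SignApprox p δ C)
    (hR : SteepZero R x₀ (2 * r) (2 * d)) (hK : LipschitzWith K (deriv R)) (hS : C1Ball a b S) :
    C1Ball a b (correctorMap g p R S) := by
  have hslope : d < deriv R 0 := by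
    linarith [hR.pos_slope, hR.lt_deriv 0 (by simpa using hR.pos_width)]
  have hB := hg.nonneg_bound
  have hmean := hp.abs_integral_signDefect_le (hs.steepZero_add hp hR hS) hs.lt_gap.le hslope
    fun x hx => hS.abs_add_sub_deriv_mul_le hR.differentiable hR.map_zero hK hx
  refine hg.c1Ball_greenSolution hc (hs.isLocalizedSource hp hR hS) (le_trans ?_ hs.le_radius)
    hs.le_radius_deriv
  gcongr

theorem abs_deriv_correctorMap_sub_le (hs : SmallScale B L C K r d δ a b) (hc : c ≠ 0)
    (hg : IsGreenFunction c g B L) (hp : SignApprox p δ C)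
    (hR : SteepZero R x₀ (2 * r) (2 * d)) (hS : C1Ball a b S) (hS' : C1Ball a b S') {D : ℝ}
    (hD : ∀ x, |deriv S x - deriv S' x| ≤ D) (x : ℝ) :
    |deriv (correctorMap g p R S) x - deriv (correctorMap g p R S') x| ≤ 1 / 2 * D := by
  have hD0 : 0 ≤ D := (abs_nonneg _).trans (hD 0)
  have hsub := hp.isLocalizedSource_sub (hs.steepZero_add hp hR hS) hs.lt_gap.le
    (hs.steepZero_add hp hR hS') hs.lt_gap.le (D := D) fun x _ => by
      rw [add_sub_add_left_eq_sub]
      exact hS.abs_sub_le hS' hD x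
  calc _ ≤ 2 * (δ / d) * L * (C * D / d) := hg.abs_deriv_greenSolution_sub_le hc
        (hs.isLocalizedSource hp hR hS) (hs.isLocalizedSource hp hR hS') hsub x
    _ = 2 * (δ / d) * L * (C / d) * D := by ring
    _ ≤ 1 / 2 * D := mul_le_mul_of_nonneg_right hs.contraction hD0

theorem lipschitzWith_deriv_correctorMap {M : ℝ≥0} (hs : SmallScale B L C K r d δ a b)
    (hc : c ≠ 0) (hg : IsGreenFunction c g B L) (hp : SignApprox p δ C)
    (hR : SteepZero R x₀ (2 * r) (2 * d)) (hK : LipschitzWith K (deriv R)) (hS : C1Ball a b S)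
    (hM : a + (C + 1) ≤ M) :
    LipschitzWith (4 * M / ‖c ^ 2‖₊) (deriv (correctorMap g p R S)) :=
  hg.lipschitzWith_deriv_greenSolution hc (hs.isLocalizedSource hp hR hS) fun x =>
    (abs_sub _ _).trans <| (add_le_add
      ((hs.c1Ball_correctorMap hc hg hp hR hK hS).abs_apply_le x)
      ((hs.isLocalizedSource hp hR hS).abs_apply_le x)).trans hM

theorem exists_fixedPoint (hs : SmallScale B L C K r d δ a b) (hc : c ≠ 0)
    (hg : IsGreenFunction c g B L) (hp : SignApprox p δ C)
    (hR : SteepZero R x₀ (2 * r) (2 * d)) (hK : LipschitzWith K (deriv R)) (ha : 0 ≤ a)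
    (hb : 0 ≤ b) : ∃ S, C1Ball a b S ∧ correctorMap g p R S = S :=
  C1Ball.exists_fixedPoint (q := 1 / 2) ha hb one_half_lt_one
    (fun _ hS => hs.c1Ball_correctorMap hc hg hp hR hK hS)
    (fun _ hS => hg.continuous_deriv_greenSolution hc (hs.isLocalizedSource hp hR hS))
    fun _ _ _ hS hS' hD => hs.abs_deriv_correctorMap_sub_le hc hg hp hR hS hS' hD

theorem exists_corrector {M : ℝ≥0} (hs : SmallScale B L C K r d δ a b) (hc : c ≠ 0)
    (hg : IsGreenFunction c g B L) (hp : SignApprox p δ C)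
    (hR : SteepZero R x₀ (2 * r) (2 * d)) (hK : LipschitzWith K (deriv R)) (ha : 0 ≤ a)
    (hb : 0 ≤ b) (hM : a + (C + 1) ≤ M) :
    ∃ S, C1Ball a b S ∧ LipschitzWith (4 * M / ‖c ^ 2‖₊) (deriv S) ∧
      (∃ l, Tendsto S atTop (𝓝 l)) ∧
      ∃ η, ∀ x, Mop c S x = Aop (Aop (signDefect p fun x => R x + S x)) x + η := by
  obtain ⟨S, hS, hfix⟩ := hs.exists_fixedPoint hc hg hp hR hK ha hb
  have hG := (hs.isLocalizedSource hp hR hS).integrable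
  have hlip := hs.lipschitzWith_deriv_correctorMap hc hg hp hR hK hS hM
  have hlim := hg.exists_tendsto_greenSolution hG
  have hMop := hg.Mop_greenSolution hG
  rw [correctorMap] at hfix hlip
  rw [hfix] at hlip hlim hMop
  exact ⟨S, hS, hlip, hlim, hMop⟩

theorem correctorMap_eq_of_Mop_eq (hs : SmallScale B L C K r d δ a b) (h : HasSimpleRoots c kc)
    (hg : IsGreenFunction c g B L) (hp : SignApprox p δ C)
    (hR : SteepZero R x₀ (2 * r) (2 * d)) (hK : LipschitzWith K (deriv R)) (hS : C1Ball a b S)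
    (hl : Tendsto S atTop (𝓝 l))
    (hM : ∀ x, Mop c S x = Aop (Aop (signDefect p fun x => R x + S x)) x + η) :
    correctorMap g p R S = S := by
  have hG := (hs.isLocalizedSource hp hR hS).integrable
  obtain ⟨_, hlim⟩ := hg.exists_tendsto_greenSolution hG
  obtain ⟨_, hMop⟩ := hg.Mop_greenSolution hG
  exact (hs.c1Ball_correctorMap h.speed_ne_zero hg hp hR hK hS).eq_of_Mop_eq h hS hlim hl hMop hM

theorem eq_of_Mop_eq (hs : SmallScale B L C K r d δ a b) (h : HasSimpleRoots c kc)
    (hg : IsGreenFunction c g B L) (hp : SignApprox p δ C)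
    (hR : SteepZero R x₀ (2 * r) (2 * d)) (hK : LipschitzWith K (deriv R))
    (hS : C1Ball a b S) (hS' : C1Ball a b S') (hl : Tendsto S atTop (𝓝 l))
    (hl' : Tendsto S' atTop (𝓝 l'))
    (hM : ∀ x, Mop c S x = Aop (Aop (signDefect p fun x => R x + S x)) x + η)
    (hM' : ∀ x, Mop c S' x = Aop (Aop (signDefect p fun x => R x + S' x)) x + η') : S = S' :=
  C1Ball.fixedPoint_unique (T := correctorMap g p R) (q := 1 / 2) one_half_lt_one
    (fun _ _ _ hS hS' hD => hs.abs_deriv_correctorMap_sub_le h.speed_ne_zero hg hp hR hS hS' hD)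
    hS hS' (hs.correctorMap_eq_of_Mop_eq h hg hp hR hK hS hl hM)
    (hs.correctorMap_eq_of_Mop_eq h hg hp hR hK hS' hl' hM')

end SmallScale

section UnperturbedWave

variable {c kc : ℝ} {R₀ : ℝ → ℝ}

theorem UnperturbedWave.exists_steepZero (hR : UnperturbedWave c R₀) :
    ∃ x₀ r d, SteepZero R₀ x₀ (2 * r) (2 * d) := by
  obtain ⟨⟨hdiff, -⟩, hzero, -, x₀, r, d, hx₀, hr, hd, hright, hleft, hslope⟩ := hR
  refine ⟨x₀, r / 2, d / 2, ?_⟩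
  rw [mul_div_cancel₀ _ two_ne_zero, mul_div_cancel₀ _ two_ne_zero]
  exact ⟨hdiff, hzero, hx₀, hr, hd, hright, hleft, hslope⟩

theorem UnperturbedWave.exists_isGreenFunction (hR : UnperturbedWave c R₀)
    (h : HasSimpleRoots c kc) : ∃ g B L, IsGreenFunction c g B L := by
  obtain ⟨x₀, r, d, hsteep⟩ := hR.exists_steepZero
  obtain ⟨⟨hdiff, ⟨C, hC⟩, K, hK⟩, -, ⟨μ, hμ⟩, -⟩ := hR
  simp only [hsteep.sign_apply] at hμ
  exact h.exists_isGreenFunction hdiff (fun x => (hC x).2) hK hμ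

theorem SteepZero.Gop_eq_signDefect {x₀ r d : ℝ} (hR : SteepZero R₀ x₀ r d) (Ψ : ℝ → ℝ → ℝ)
    (δ : ℝ) (S : ℝ → ℝ) :
    Gop Ψ δ R₀ S = signDefect (deriv (Ψ δ)) fun x => R₀ x + S x := by
  ext x
  rw [Gop, signDefect, hR.sign_apply]

end UnperturbedWave

/-- for small `δ` there is exactly one `S ∈ X` in the ball
`‖S‖_∞ ≤ C₀δ²`, `‖S'‖_∞ ≤ C₁δ`, `‖S''‖_∞ ≤ C₂` solving `M S = A² G(S) + η`
for some `η ∈ ℝ`; moreover this `S` is `δ`-admissible. -/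
theorem stmt13 (c kc : ℝ) (hc0 : 0 < c) (hc1 : c < 1) (hkc : 0 < kc)
    (ha : symb kc = c) (hm' : deriv (msymb c) kc ≠ 0)
    (hroots : ∀ k : ℝ, k ≠ kc → k ≠ -kc → msymb c k ≠ 0)
    (Ψ : ℝ → ℝ → ℝ) (CΨ : ℝ) (hA : AssumptionA Ψ CΨ)
    (hI : ∀ δ : ℝ, 0 < δ → Idelta Ψ δ = 0)
    (R₀ : ℝ → ℝ) (hR₀ : UnperturbedWave c R₀) :
    ∃ (C₀ C₁ : ℝ) (C₂ : NNReal) (δ₀ : ℝ), 0 < C₀ ∧ 0 < C₁ ∧ 0 < C₂ ∧ 0 < δ₀ ∧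
      ∀ δ : ℝ, 0 < δ → δ < δ₀ →
        ∃ S : ℝ → ℝ,
          (IsX S ∧ (∀ x, |S x| ≤ C₀ * δ ^ 2) ∧ (∀ x, |deriv S x| ≤ C₁ * δ) ∧
            LipschitzWith C₂ (deriv S) ∧
            ∃ η : ℝ, ∀ x, Mop c S x = Aop (Aop (Gop Ψ δ R₀ S)) x + η) ∧
          Admissible δ R₀ S ∧
          (∀ S' : ℝ → ℝ,
            (IsX S' ∧ (∀ x, |S' x| ≤ C₀ * δ ^ 2) ∧ (∀ x, |deriv S' x| ≤ C₁ * δ) ∧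
              LipschitzWith C₂ (deriv S') ∧
              ∃ η : ℝ, ∀ x, Mop c S' x = Aop (Aop (Gop Ψ δ R₀ S')) x + η) → S' = S) := by
  have h : HasSimpleRoots c kc := ⟨hkc, ha, hm', hroots⟩
  obtain ⟨g, B, L, hg⟩ := hR₀.exists_isGreenFunction h
  obtain ⟨x₀, r, d, hsteep⟩ := hR₀.exists_steepZero
  obtain ⟨⟨-, -, K, hK⟩, -⟩ := hR₀
  obtain ⟨C₀, C₁, hC₀, hC₁, hsmall⟩ := exists_smallScale (C := CΨ)
    hg.nonneg_bound L.coe_nonneg hA.1.le K.coe_nonneg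
    (pos_of_mul_pos_right hsteep.pos_gap zero_le_two)
    (pos_of_mul_pos_right hsteep.pos_slope zero_le_two)
  obtain ⟨δ₀, hδ₀, hsub⟩ := mem_nhdsGT_iff_exists_Ioo_subset.1 hsmall
  have hC₂ : 0 < 4 * (CΨ + 2).toNNReal / ‖c ^ 2‖₊ := div_pos
    (mul_pos four_pos (Real.toNNReal_pos.2 (by linarith [hA.1]))) (nnnorm_pos.2 (by positivity))
  refine ⟨C₀, C₁, _, δ₀, hC₀, hC₁, hC₂, hδ₀, fun δ hδ hδ₀ => ?_⟩
  obtain ⟨hone, hs⟩ := hsub ⟨hδ, hδ₀⟩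
  have hp := hA.signApprox hδ (hI δ hδ)
  simp only [hsteep.Gop_eq_signDefect]
  obtain ⟨S, hS, hlip, ⟨l, hl⟩, η, hM⟩ := hs.exists_corrector (M := (CΨ + 2).toNNReal) hc0.ne' hg hp
    hsteep hK (by positivity) (by positivity) (by linarith [Real.le_coe_toNNReal (CΨ + 2)])
  have hW := hS.isW2inf hlip
  refine ⟨S, ⟨⟨hW, hS.map_zero, l, hl⟩, hS.abs_apply_le, hS.abs_deriv_le, hlip, η, hM⟩,
    hS.admissible hW hsteep hK hδ hs.lt_gap hs.le_gap hs.slope_le, ?_⟩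
  rintro S' ⟨⟨hW', hzero', l', hl'⟩, hle, hle', -, η', hM'⟩
  exact hs.eq_of_Mop_eq h hg hp hsteep hK ⟨hW'.1, hzero', hle, hle'⟩ hS hl' hl hM' hM
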